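/- arXiv:1303.5559 — 9 statements merged into one kernel-verified Lean document; each statement's English description precedes it below -/
import Mathlib

section
/- Let F be any field of characteristic 2. Then the veronesean-spin embedding ε of the symplectic generalized quadrangle W(3,F) in PG(F^10) is not relatively universal; that is, there exist a veronesean embedding ε' of W(3,F) and a non-injective morphism from ε' to ε. -/
open Cardinal

universe u v

/-- A non-singular conic in `PG(V)`: the image of the standard conic
`{⟨(s², st, t²)⟩}` of `PG(F³)` under the map induced by an injective linear map `F³ → V`. -/
def IsConic (F : Type*) [Field F] {V : Type v} [AddCommGroup V] [Module F V]
    (C : Set (Submodule F V)) : Prop :=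
  ∃ φ : (Fin 3 → F) →ₗ[F] V, Function.Injective φ ∧
    C = {p | ∃ s t : F, ¬(s = 0 ∧ t = 0) ∧
          p = Submodule.span F {φ ![s ^ 2, s * t, t ^ 2]}}

/-- A veronesean embedding of the point-line geometry `(P, L)` in `PG(V)`: an injective map
from points to 1-dimensional subspaces of `V`, mapping every line bijectively onto a
non-singular conic, with `ε(p) ∩ ⟨ε(l)⟩ = 0` for non-incident `(p,l)`, and whose image
spans `V`. -/
structure VerEmb (F : Type*) [Field F] (P : Type*) (L : Set (Set P))
    (V : Type v) [AddCommGroup V] [Module F V] where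
  toFun : P → Submodule F V
  point : ∀ p : P, ∃ w : V, w ≠ 0 ∧ toFun p = Submodule.span F {w}
  injective : Function.Injective toFun
  conic : ∀ l ∈ L, IsConic F (toFun '' l)
  disjoint_line : ∀ p : P, ∀ l ∈ L, p ∉ l → toFun p ⊓ (⨆ x ∈ l, toFun x) = ⊥
  spans : (⨆ p : P, toFun p) = ⊤

/-- `ε` (a map from points of `(P,L)` to points of `PG(V)`) is relatively universal: every
morphism to `ε` from any veronesean embedding `ε'` of `(P,L)` — i.e. every surjective
`σ`-semilinear map `f` (with `σ` a field automorphism) carrying each `ε'(p)` onto `ε(p)` —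
is injective. -/
def RelUniversal (F : Type*) [Field F] (P : Type*) (L : Set (Set P))
    (V : Type*) [AddCommGroup V] [Module F V] (ε : P → Submodule F V) : Prop :=
  ∀ (V' : Type u) [AddCommGroup V'] [Module F V'], ∀ (ε' : VerEmb F P L V')
    (σ : F →+* F), Function.Bijective σ → ∀ f : V' →ₛₗ[σ] V,
      Function.Surjective f → (∀ p : P, f '' (ε'.toFun p : Set V') = (ε p : Set V)) →
      Function.Injective f

/-- The alternating form `α(x,y) = x₁y₄ + x₂y₃ + x₃y₂ + x₄y₁` on `F⁴` (indices `0,…,3`). -/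
def alphaForm (F : Type*) [Field F] (x y : Fin 4 → F) : F :=
  x 0 * y 3 + x 1 * y 2 + x 2 * y 1 + x 3 * y 0

/-- The quadric veronesean map `ν₄ : F⁴ → F^10`, `x ↦ (x_i x_j)_{i ≤ j}`, with the ten
coordinates indexed by unordered pairs from `Fin 4`. -/
def nu4 (F : Type*) [Field F] (x : Fin 4 → F) : Sym2 (Fin 4) → F :=
  Sym2.lift ⟨fun i j => x i * x j, fun _ _ => mul_comm _ _⟩

/-- The points of the symplectic generalized quadrangle `W(3,F)`:
the 1-dimensional subspaces of `F⁴`. -/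
def SPoint (F : Type*) [Field F] :=
  {W : Submodule F (Fin 4 → F) // Module.finrank F ↥W = 1}

/-- The lines of `W(3,F)`: point sets of the totally `α`-isotropic 2-subspaces of `F⁴`. -/
def SLines (F : Type*) [Field F] : Set (Set (SPoint F)) :=
  {S | ∃ W : Submodule F (Fin 4 → F), Module.finrank F ↥W = 2 ∧
    (∀ x ∈ W, ∀ y ∈ W, alphaForm F x y = 0) ∧ S = {p : SPoint F | p.1 ≤ W}}

/-- The veronesean-spin embedding of `W(3,F)` in `PG(F^10)`: `⟨x⟩ ↦ ⟨ν₄(x)⟩`. -/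
def epsVS (F : Type*) [Field F] (p : SPoint F) : Submodule F (Sym2 (Fin 4) → F) :=
  Submodule.span F (nu4 F '' (p.1 : Set (Fin 4 → F)))

/-! Over a field of characteristic 2, choose an additive `φ : F → F` with `φ (a² b) = a φ b` and
`φ 1 = 1` (the square root, if `F` is perfect), and let `q = x₀x₃ + x₁x₂`, whose polar form is `α`.
On a totally isotropic plane `q` is additive, so `φ ∘ q` is linear there and `x₀ φ(q(x))` is
quadratic; on `F⁴` it is not. Adjoining it to `ν₄` as an eleventh coordinate therefore gives a
veronesean embedding in `PG(F^11)`, and forgetting that coordinate is a non-injective morphism to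
the veronesean-spin embedding. -/

open Module Submodule

section FrobeniusSplitting

/-- A Frobenius splitting of a ring, in characteristic `p`: an additive, `p⁻¹`-linear map `φ`
sending `1` to `1`. For `p = 2` it plays the role of a square root. -/
structure IsFrobeniusSplitting {R : Type*} [CommRing R] (p : ℕ) (φ : R →+ R) : Prop where
  map_one : φ 1 = 1
  map_pow_mul : ∀ a b : R, φ (a ^ p * b) = a * φ b

theorem exists_isFrobeniusSplitting (F : Type*) [Field F] (p : ℕ) [ExpChar F p] :
    ∃ φ : F →+ F, IsFrobeniusSplitting p φ := by
  let e := (frobenius F p).rangeRestrictFieldEquiv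
  obtain ⟨f, hf⟩ :=
    Projective.exists_dual_eq_one (frobenius F p).fieldRange (one_ne_zero (α := F))
  refine ⟨e.symm.toAddMonoidHom.comp f.toAddMonoidHom, by simp [hf], fun a b => ?_⟩
  have hf_smul : f (a ^ p * b) = e a * f b := f.map_smul (e a) b
  simp [hf_smul]

end FrobeniusSplitting

section QuadraticAlong

variable {R M N N' : Type*} [CommRing R] [AddCommGroup M] [Module R M] [AddCommGroup N]
  [Module R N] [AddCommGroup N'] [Module R N']

variable (R) in
/-- The map `G` is a quadratic map along the vectors `x`, `y`: it is given on their linear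
combinations by a binary quadratic form, whose mixed coefficient is necessarily the polar. -/
def IsQuadraticAlong (G : M → N) (x y : M) : Prop :=
  ∀ s t : R, G (s • x + t • y) =
    s ^ 2 • G x + (s * t) • QuadraticMap.polar G x y + t ^ 2 • G y

theorem IsQuadraticAlong.map_smul {G : M → N} {x : M} (h : IsQuadraticAlong R G x 0) (c : R) :
    G (c • x) = c ^ 2 • G x := by
  simpa using h c 0

theorem IsQuadraticAlong.prodMk {G : M → N} {H : M → N'} {x y : M}
    (hG : IsQuadraticAlong R G x y) (hH : IsQuadraticAlong R H x y) :
    IsQuadraticAlong R (fun z => (G z, H z)) x y :=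
  fun s t => Prod.ext (hG s t) (hH s t)

theorem IsFrobeniusSplitting.isQuadraticAlong_mul {φ : R →+ R} (hφ : IsFrobeniusSplitting 2 φ)
    (l : Dual R M) (q : QuadraticForm R M) {x y : M} (hxy : QuadraticMap.polar q x y = 0) :
    IsQuadraticAlong R (fun z => l z * φ (q z)) x y := by
  have hφq (s t : R) : φ (q (s • x + t • y)) = s * φ (q x) + t * φ (q y) := by
    have hq : q (s • x + t • y) = s ^ 2 * q x + t ^ 2 * q y := by
      simp [QuadraticMap.map_add, hxy, QuadraticMap.map_smul, sq]
    rw [hq, map_add, hφ.map_pow_mul, hφ.map_pow_mul]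
  have hφq_add : φ (q (x + y)) = φ (q x) + φ (q y) := by simpa using hφq 1 1
  intro s t
  simp only [QuadraticMap.polar, hφq, hφq_add, map_add, map_smul, smul_eq_mul]
  ring

end QuadraticAlong

section DominatesVeronese

variable {F V N : Type*} [Field F] [AddCommGroup V] [Module F V] [AddCommGroup N] [Module F N]

variable (F) in
/-- The subspace spanned by the image of a subspace `W` under a map `G`, not assumed linear. A map
of vectors `G` induces in this way a map of projective points. -/
def spanImage (G : V → N) (W : Submodule F V) : Submodule F N :=
  span F (G '' W)

theorem spanImage_span_singleton {G : V → N} {x : V} (hG : IsQuadraticAlong F G x 0) :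
    spanImage F G (span F {x}) = span F {G x} := by
  refine le_antisymm (span_le.2 ?_) (span_mono ?_)
  · rintro _ ⟨y, hy, rfl⟩
    obtain ⟨c, rfl⟩ := mem_span_singleton.1 hy
    exact hG.map_smul c ▸ smul_mem _ _ (mem_span_singleton_self _)
  · exact Set.singleton_subset_iff.2 ⟨x, mem_span_singleton_self x, rfl⟩

variable (F) in
/-- The map `G` dominates the quadric Veronese map: every product of two linear forms, hence every
quadratic monomial, factors linearly through `G`. -/
def DominatesVeronese (G : V → N) : Prop :=
  ∀ f g : Dual F V, ∃ Φ : Dual F N, ∀ x, Φ (G x) = f x * g x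

namespace DominatesVeronese

variable {G : V → N}

theorem mem_spanImage_iff (hG : DominatesVeronese F G) {x : V} {W : Submodule F V} :
    G x ∈ spanImage F G W ↔ x ∈ W := by
  refine ⟨fun hGx => ?_, fun hx => subset_span ⟨x, hx, rfl⟩⟩
  by_contra hx
  obtain ⟨f, hfx, hfW⟩ := exists_le_ker_of_notMem hx
  obtain ⟨Φ, hΦ⟩ := hG f f
  have hW : spanImage F G W ≤ LinearMap.ker Φ := by
    rw [spanImage, span_le]
    rintro _ ⟨y, hy, rfl⟩
    have hfy : f y = 0 := hfW hy
    simp [hΦ, hfy]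
  have hΦx : Φ (G x) = 0 := hW hGx
  exact hfx (mul_self_eq_zero.1 (hΦ x ▸ hΦx))

theorem map_ne_zero (hG : DominatesVeronese F G) {x : V} (hx : x ≠ 0) : G x ≠ 0 := by
  intro h
  have hbot : x ∈ (⊥ : Submodule F V) := hG.mem_spanImage_iff.1 (h ▸ zero_mem _)
  exact hx ((mem_bot F).1 hbot)

theorem spanImage_injective (hG : DominatesVeronese F G) :
    Function.Injective (spanImage F G) := by
  intro W W' h
  ext x
  rw [← hG.mem_spanImage_iff, h, hG.mem_spanImage_iff]

theorem prodMk {N' : Type*} [AddCommGroup N'] [Module F N'] (hG : DominatesVeronese F G)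
    (H : V → N') : DominatesVeronese F (fun x => (G x, H x)) := fun f g =>
  let ⟨Φ, hΦ⟩ := hG f g
  ⟨Φ ∘ₗ LinearMap.fst F N N', hΦ⟩

end DominatesVeronese

theorem exists_dual_apply_eq_of_linearIndependent {ι : Type*} {v : ι → V}
    (hv : LinearIndependent F v) (c : ι → F) : ∃ f : Dual F V, ∀ i, f (v i) = c i := by
  obtain ⟨g, hg⟩ := LinearMap.exists_leftInverse_of_injective (Finsupp.linearCombination F v)
    (LinearMap.ker_eq_bot.2 hv)
  refine ⟨Finsupp.linearCombination F c ∘ₗ g, fun i => ?_⟩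
  have hgi : g (v i) = Finsupp.single i 1 := by
    simpa using LinearMap.congr_fun hg (Finsupp.single i 1)
  simp [hgi]

theorem exists_linearIndependent_pair_of_finrank_eq_two {W : Submodule F V}
    (hW : finrank F W = 2) :
    ∃ u v : V, LinearIndependent F ![u, v] ∧ span F {u, v} = W := by
  have : Module.Finite F W := finite_of_finrank_pos (hW ▸ two_pos)
  let b := finBasisOfFinrankEq F W hW
  have hb : (fun i => (b i : V)) = ![(b 0 : V), (b 1 : V)] := by
    ext i; fin_cases i <;> rfl
  refine ⟨b 0, b 1, hb ▸ b.linearIndependent.map' W.subtype W.ker_subtype, ?_⟩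
  have hspan := congrArg (Submodule.map W.subtype) b.span_eq
  rw [map_span, ← Set.range_comp, map_subtype_top] at hspan
  have hrange : Set.range (W.subtype ∘ b) = {(b 0 : V), (b 1 : V)} := by
    change Set.range (fun i => (b i : V)) = _
    rw [hb, Matrix.range_cons_cons_empty]
  rwa [hrange] at hspan

theorem DominatesVeronese.linearIndependent_polar {G : V → N} (hG : DominatesVeronese F G)
    {u v : V} (huv : LinearIndependent F ![u, v]) :
    LinearIndependent F ![G u, QuadraticMap.polar G u v, G v] := by
  obtain ⟨f, hf⟩ := exists_dual_apply_eq_of_linearIndependent huv ![1, 0]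
  obtain ⟨g, hg⟩ := exists_dual_apply_eq_of_linearIndependent huv ![0, 1]
  simp only [Fin.forall_fin_two, Matrix.cons_val_zero, Matrix.cons_val_one] at hf hg
  obtain ⟨Φff, hff⟩ := hG f f
  obtain ⟨Φfg, hfg⟩ := hG f g
  obtain ⟨Φgg, hgg⟩ := hG g g
  refine LinearIndependent.of_pairwise_dual_eq_zero_one _ ![Φff, Φfg, Φgg] ?_ ?_
  · intro i j hij
    fin_cases i <;> fin_cases j <;>
      simp [QuadraticMap.polar, hff, hfg, hgg, hf, hg] at hij ⊢
  · intro i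
    fin_cases i <;> simp [QuadraticMap.polar, hff, hfg, hgg, hf, hg]

theorem isConic_of_isQuadraticAlong {G : V → N} (hG : DominatesVeronese F G) {u v : V}
    (hli : LinearIndependent F ![u, v]) (huv : IsQuadraticAlong F G u v) :
    IsConic F {P | ∃ x ∈ span F {u, v}, x ≠ 0 ∧ P = span F {G x}} := by
  have hparam (s t : F) : Fintype.linearCombination F ![G u, QuadraticMap.polar G u v, G v]
      ![s ^ 2, s * t, t ^ 2] = G (s • u + t • v) := by
    simp [Fintype.linearCombination_apply, Fin.sum_univ_three, huv s t]
  have hzero (s t : F) : s • u + t • v = 0 ↔ s = 0 ∧ t = 0 :=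
    ⟨LinearIndependent.pair_iff.1 hli s t, fun h => by simp [h]⟩
  refine ⟨Fintype.linearCombination F ![G u, QuadraticMap.polar G u v, G v],
    (hG.linearIndependent_polar hli).fintypeLinearCombination_injective, ?_⟩
  ext P
  simp only [Set.mem_ofPred_eq, mem_span_pair, hparam]
  constructor
  · rintro ⟨_, ⟨s, t, rfl⟩, hne, rfl⟩
    exact ⟨s, t, mt (hzero s t).2 hne, rfl⟩
  · rintro ⟨s, t, hst, rfl⟩
    exact ⟨_, ⟨s, t, rfl⟩, mt (hzero s t).1 hst, rfl⟩

end DominatesVeronese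

section SymplecticQuadrangle

variable {F : Type*} [Field F]

namespace SPoint

/-- The point of `W(3,F)` spanned by a nonzero vector. -/
def ofVector (x : Fin 4 → F) (hx : x ≠ 0) : SPoint F :=
  ⟨span F {x}, finrank_span_singleton hx⟩

theorem exists_eq_ofVector (p : SPoint F) : ∃ x hx, p = ofVector x hx := by
  obtain ⟨x, hxp, hx, hp⟩ :=
    (rank_submodule_eq_one_iff p.1).1 (rank_eq_one_iff_finrank_eq_one.2 p.2)
  exact ⟨x, hx, Subtype.ext (hp.antisymm (span_singleton_le_iff_mem x p.1 |>.2 hxp))⟩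

theorem ofVector_le_iff {x : Fin 4 → F} {hx : x ≠ 0} {W : Submodule F (Fin 4 → F)} :
    (ofVector x hx).1 ≤ W ↔ x ∈ W :=
  span_singleton_le_iff_mem x W

end SPoint

/-- A map on the vectors of `F⁴` inducing a veronesean embedding of `W(3,F)` on points: quadratic
along the lines of `W(3,F)`, dominating the quadric Veronese map and with spanning image. -/
structure IsVeroneseanMap {N : Type*} [AddCommGroup N] [Module F N] (G : (Fin 4 → F) → N) :
    Prop where
  isQuadraticAlong : ∀ x y, alphaForm F x y = 0 → IsQuadraticAlong F G x y
  dominatesVeronese : DominatesVeronese F G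
  span_range : span F (Set.range G) = ⊤

namespace IsVeroneseanMap

variable {N : Type*} [AddCommGroup N] [Module F N] {G : (Fin 4 → F) → N}

theorem isQuadraticAlong_zero (hG : IsVeroneseanMap G) (x : Fin 4 → F) :
    IsQuadraticAlong F G x 0 :=
  hG.isQuadraticAlong x 0 (by simp [alphaForm])

theorem spanImage_ofVector (hG : IsVeroneseanMap G) {x : Fin 4 → F} (hx : x ≠ 0) :
    spanImage F G (SPoint.ofVector x hx).1 = span F {G x} :=
  spanImage_span_singleton (hG.isQuadraticAlong_zero x)

theorem isConic_image (hG : IsVeroneseanMap G) {l : Set (SPoint F)} (hl : l ∈ SLines F) :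
    IsConic F ((fun p : SPoint F => spanImage F G p.1) '' l) := by
  obtain ⟨W, hW, hiso, rfl⟩ := hl
  obtain ⟨u, v, hli, rfl⟩ := exists_linearIndependent_pair_of_finrank_eq_two hW
  have huv := hG.isQuadraticAlong u v
    (hiso u (subset_span (by simp)) v (subset_span (by simp)))
  convert isConic_of_isQuadraticAlong hG.dominatesVeronese hli huv using 1
  ext P
  constructor
  · rintro ⟨p, hp, rfl⟩
    obtain ⟨x, hx, rfl⟩ := p.exists_eq_ofVector
    exact ⟨x, SPoint.ofVector_le_iff.1 hp, hx, hG.spanImage_ofVector hx⟩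
  · rintro ⟨x, hxW, hx, rfl⟩
    exact ⟨.ofVector x hx, SPoint.ofVector_le_iff.2 hxW, hG.spanImage_ofVector hx⟩

theorem disjoint_of_notMem (hG : IsVeroneseanMap G) {p : SPoint F} {l : Set (SPoint F)}
    (hl : l ∈ SLines F) (hp : p ∉ l) :
    Disjoint (spanImage F G p.1) (⨆ r ∈ l, spanImage F G r.1) := by
  obtain ⟨W, -, -, rfl⟩ := hl
  obtain ⟨x, hx, rfl⟩ := p.exists_eq_ofVector
  have hline : ⨆ r ∈ {r : SPoint F | r.1 ≤ W}, spanImage F G r.1 ≤ spanImage F G W :=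
    iSup₂_le fun r hr => span_mono (Set.image_mono hr)
  have hGx : G x ∉ spanImage F G W := fun h =>
    hp (SPoint.ofVector_le_iff.2 (hG.dominatesVeronese.mem_spanImage_iff.1 h))
  rw [hG.spanImage_ofVector hx]
  exact (disjoint_span_singleton_of_notMem hGx).symm.mono_right hline

theorem iSup_spanImage (hG : IsVeroneseanMap G) :
    ⨆ p : SPoint F, spanImage F G p.1 = ⊤ := by
  rw [eq_top_iff, ← hG.span_range, span_le]
  rintro _ ⟨x, rfl⟩
  by_cases hx : x = 0
  · have hG0 : G x = 0 := by simpa [hx] using (hG.isQuadraticAlong_zero 0).map_smul 0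
    exact hG0 ▸ zero_mem _
  · exact mem_iSup_of_mem (SPoint.ofVector x hx)
      (hG.dominatesVeronese.mem_spanImage_iff.2 (mem_span_singleton_self x))

/-- The veronesean embedding of `W(3,F)` induced by a map of vectors. -/
def toVerEmb (hG : IsVeroneseanMap G) : VerEmb F (SPoint F) (SLines F) N where
  toFun p := spanImage F G p.1
  point p := by
    obtain ⟨x, hx, rfl⟩ := p.exists_eq_ofVector
    exact ⟨G x, hG.dominatesVeronese.map_ne_zero hx, hG.spanImage_ofVector hx⟩
  injective _ _ h := Subtype.ext (hG.dominatesVeronese.spanImage_injective h)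
  conic _ hl := hG.isConic_image hl
  disjoint_line _ _ hl hp := (hG.disjoint_of_notMem hl hp).eq_bot
  spans := hG.iSup_spanImage

end IsVeroneseanMap

end SymplecticQuadrangle

section QuadricVeronese

variable {F : Type*} [Field F]

theorem nu4_mk (x : Fin 4 → F) (i j : Fin 4) : nu4 F x s(i, j) = x i * x j := rfl

theorem isQuadraticAlong_nu4 (x y : Fin 4 → F) : IsQuadraticAlong F (nu4 F) x y := by
  intro s t
  funext z
  induction z with | _ i j
  simp only [QuadraticMap.polar, Pi.add_apply, Pi.sub_apply, Pi.smul_apply, nu4_mk, smul_eq_mul]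
  ring

theorem dominatesVeronese_nu4 : DominatesVeronese F (nu4 F) := by
  intro f g
  refine ⟨∑ i, ∑ j, (f (Pi.single i 1) * g (Pi.single j 1)) • LinearMap.proj s(i, j),
    fun x => ?_⟩
  have hsum (h : Dual F (Fin 4 → F)) : h x = ∑ i, x i * h (Pi.single i 1) := by
    conv_lhs => rw [← (Pi.basisFun F (Fin 4)).sum_repr x]
    simp
  rw [hsum f, hsum g, Finset.sum_mul_sum]
  simp only [LinearMap.sum_apply, LinearMap.smul_apply, LinearMap.proj_apply, nu4_mk, smul_eq_mul]
  exact Finset.sum_congr rfl fun i _ => Finset.sum_congr rfl fun j _ => by ring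

theorem nu4_single (i : Fin 4) : nu4 F (Pi.single i 1) = Pi.single s(i, i) 1 := by
  funext z
  induction z with | _ a b
  simp only [nu4_mk, Pi.single_apply, Sym2.eq_iff]
  grind

theorem polar_nu4_single {i j : Fin 4} (hij : i ≠ j) :
    QuadraticMap.polar (nu4 F) (Pi.single i 1) (Pi.single j 1) = Pi.single s(i, j) 1 := by
  funext z
  induction z with | _ a b
  simp only [QuadraticMap.polar, Pi.sub_apply, nu4_mk, Pi.add_apply, Pi.single_apply, Sym2.eq_iff]
  grind

theorem span_range_nu4 : span F (Set.range (nu4 F)) = ⊤ := by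
  have hmem (x : Fin 4 → F) : nu4 F x ∈ span F (Set.range (nu4 F)) := subset_span ⟨x, rfl⟩
  rw [eq_top_iff, ← (Pi.basisFun F (Sym2 (Fin 4))).span_eq, span_le]
  rintro _ ⟨z, rfl⟩
  induction z with | _ i j
  rw [Pi.basisFun_apply]
  rcases eq_or_ne i j with rfl | hij
  · exact nu4_single (F := F) i ▸ hmem _
  · exact polar_nu4_single (F := F) hij ▸ sub_mem (sub_mem (hmem _) (hmem _)) (hmem _)

end QuadricVeronese

section TwistedVeronese

variable {F : Type*} [Field F]

variable (F) in
/-- The hyperbolic quadratic form `x₀x₃ + x₁x₂` on `F⁴`, whose polar form is `alphaForm`. -/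
def hyperbolicForm : QuadraticForm F (Fin 4 → F) :=
  QuadraticMap.linMulLin (LinearMap.proj 0) (LinearMap.proj 3) +
    QuadraticMap.linMulLin (LinearMap.proj 1) (LinearMap.proj 2)

theorem hyperbolicForm_apply (x : Fin 4 → F) :
    hyperbolicForm F x = x 0 * x 3 + x 1 * x 2 := rfl

theorem polar_hyperbolicForm (x y : Fin 4 → F) :
    QuadraticMap.polar (hyperbolicForm F) x y = alphaForm F x y := by
  simp only [QuadraticMap.polar, hyperbolicForm_apply, alphaForm, Pi.add_apply]
  ring

/-- The quadric Veronese map of `F⁴` with the extra coordinate `x₀ φ(x₀x₃ + x₁x₂)`, where `φ` is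
meant to be a Frobenius splitting of a field of characteristic 2. -/
def twistedVeronese (φ : F → F) (x : Fin 4 → F) : (Sym2 (Fin 4) → F) × F :=
  (nu4 F x, x 0 * φ (hyperbolicForm F x))

theorem zero_one_mem_span_range_twistedVeronese {φ : F → F} (h0 : φ 0 = 0) (h1 : φ 1 = 1) :
    ((0, 1) : (Sym2 (Fin 4) → F) × F) ∈ span F (Set.range (twistedVeronese φ)) := by
  have hmem (x : Fin 4 → F) : twistedVeronese φ x ∈ span F (Set.range (twistedVeronese φ)) :=
    subset_span ⟨x, rfl⟩
  -- The third-order difference at `e₀, e₁, e₂` kills the quadratic coordinates, and in the last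
  -- one only its leading term `φ 1` survives.
  have hdiff : ((0, 1) : (Sym2 (Fin 4) → F) × F) =
      twistedVeronese φ ![1, 1, 1, 0] - twistedVeronese φ ![1, 1, 0, 0]
        - twistedVeronese φ ![1, 0, 1, 0] - twistedVeronese φ ![0, 1, 1, 0]
        + twistedVeronese φ ![1, 0, 0, 0] + twistedVeronese φ ![0, 1, 0, 0]
        + twistedVeronese φ ![0, 0, 1, 0] := by
    refine Prod.ext (funext fun z => ?_) ?_
    · induction z with | _ i j
      fin_cases i <;> fin_cases j <;> simp [twistedVeronese, nu4_mk]
    · simp [twistedVeronese, hyperbolicForm_apply, h0, h1]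
  rw [hdiff]
  exact add_mem (add_mem (add_mem (sub_mem (sub_mem (sub_mem (hmem _) (hmem _)) (hmem _))
    (hmem _)) (hmem _)) (hmem _)) (hmem _)

theorem span_range_twistedVeronese {φ : F → F} (h0 : φ 0 = 0) (h1 : φ 1 = 1) :
    span F (Set.range (twistedVeronese φ)) = ⊤ := by
  set S := span F (Set.range (twistedVeronese φ))
  have hfst : S.map (LinearMap.fst F _ F) = ⊤ := by
    rw [map_span, ← Set.range_comp]
    exact span_range_nu4
  have hker : LinearMap.ker (LinearMap.fst F (Sym2 (Fin 4) → F) F) ≤ S := by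
    rintro ⟨y, c⟩ (rfl : y = 0)
    simpa using S.smul_mem c (zero_one_mem_span_range_twistedVeronese h0 h1)
  rw [← comap_map_eq_self hker, hfst, comap_top]

theorem IsFrobeniusSplitting.isVeroneseanMap_twistedVeronese {φ : F →+ F}
    (hφ : IsFrobeniusSplitting 2 φ) : IsVeroneseanMap (twistedVeronese φ) where
  isQuadraticAlong x y hxy :=
    (isQuadraticAlong_nu4 x y).prodMk <|
      hφ.isQuadraticAlong_mul (LinearMap.proj 0) _ ((polar_hyperbolicForm x y).trans hxy)
  dominatesVeronese := dominatesVeronese_nu4.prodMk _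
  span_range := span_range_twistedVeronese φ.map_zero hφ.map_one

theorem map_fst_spanImage_twistedVeronese (φ : F → F) (p : SPoint F) :
    (spanImage F (twistedVeronese φ) p.1).map (LinearMap.fst F _ F) = epsVS F p := by
  rw [spanImage, map_span, Set.image_image]
  rfl

end TwistedVeronese

theorem statement1_general (F : Type u) [Field F] [CharP F 2] :
    ¬ RelUniversal.{u} F (SPoint F) (SLines F) (Sym2 (Fin 4) → F) (epsVS F) := by
  intro huniv
  obtain ⟨φ, hφ⟩ := exists_isFrobeniusSplitting F 2
  have hinj : Function.Injective (LinearMap.fst F (Sym2 (Fin 4) → F) F) :=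
    huniv _ hφ.isVeroneseanMap_twistedVeronese.toVerEmb (RingHom.id F) Function.bijective_id _
      LinearMap.fst_surjective
      fun p => congrArg SetLike.coe (map_fst_spanImage_twistedVeronese φ p)
  have hsnd : ((0, 1) : (Sym2 (Fin 4) → F) × F) = (0, 0) := hinj rfl
  exact one_ne_zero (congrArg Prod.snd hsnd)

/-- Let `F` be any field of characteristic 2.  The veronesean-spin embedding
`ε : ⟨x⟩ ↦ ⟨ν₄(x)⟩` of the symplectic generalized quadrangle `W(3,F)` in `PG(F^10)` is not
relatively universal: there exist a veronesean embedding `ε'` of `W(3,F)` and a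
non-injective morphism from `ε'` to `ε`. -/
theorem statement1 (F : Type) [Field F] [CharP F 2] :
    ¬ RelUniversal.{0} F (SPoint F) (SLines F) (Sym2 (Fin 4) → F) (epsVS F) :=
  statement1_general F
end

section
/- Let F be a field of characteristic 2 and let u, v ∈ F⁴ satisfy α(u,v) = u₁v₄ + u₂v₃ + u₃v₂ + u₄v₁ = 0. Put w_{ij} = u_i v_j + u_j v_i for 1 ≤ i < j ≤ 4. Then w₁₄ = w₂₃ and w₁₄² + w₁₂w₃₄ + w₁₃w₂₄ = 0. -/
/-!
Since `-1 = 1` in characteristic 2, the `w_{ij}` are the Plücker coordinates `u_i v_j - u_j v_i` of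
the line `⟨u, v⟩`, which satisfy the three-term Plücker relation, the equation of the Klein quadric.
With indices starting at `0`, the form `α` is the sum of the coordinates `p₀₃` and `p₁₂`, so the
isotropic lines are those in the hyperplane `p₀₃ = -p₁₂`, and substituting this in the Plücker
relation gives the quadric.
-/

section PluckerCoord

variable {ι R : Type*} [CommRing R]

/-- The Plücker coordinate `p_{ij}` of the line spanned by `u` and `v`, that is, the `2 × 2` minor
on the columns `i` and `j` of the matrix with rows `u` and `v`. -/
def pluckerCoord (u v : ι → R) (i j : ι) : R := u i * v j - u j * v i

theorem plucker_relation (u v : ι → R) (i j k l : ι) :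
    pluckerCoord u v i j * pluckerCoord u v k l - pluckerCoord u v i k * pluckerCoord u v j l
      + pluckerCoord u v i l * pluckerCoord u v j k = 0 := by
  simp only [pluckerCoord]
  ring

/-- The alternating form `α` on `R⁴`, with the signs that make it alternating in every
characteristic; in characteristic 2 they can be dropped. -/
def symplecticForm (u v : Fin 4 → R) : R := u 0 * v 3 + u 1 * v 2 - u 2 * v 1 - u 3 * v 0

theorem symplecticForm_eq_pluckerCoord_add (u v : Fin 4 → R) :
    symplecticForm u v = pluckerCoord u v 0 3 + pluckerCoord u v 1 2 := by
  simp only [symplecticForm, pluckerCoord]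
  ring

theorem statement3_general (u v : Fin 4 → R) (h : symplecticForm u v = 0) :
    pluckerCoord u v 0 3 = -pluckerCoord u v 1 2 ∧
    pluckerCoord u v 0 3 ^ 2 - pluckerCoord u v 0 1 * pluckerCoord u v 2 3
      + pluckerCoord u v 0 2 * pluckerCoord u v 1 3 = 0 := by
  rw [symplecticForm_eq_pluckerCoord_add] at h
  have hyperplane : pluckerCoord u v 0 3 = -pluckerCoord u v 1 2 := eq_neg_of_add_eq_zero_left h
  refine ⟨hyperplane, ?_⟩
  linear_combination pluckerCoord u v 0 3 * hyperplane - plucker_relation u v 0 1 2 3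

end PluckerCoord

/-- Let `F` be a field of characteristic 2 and `u, v ∈ F⁴` satisfy
`α(u,v) = u₁v₄ + u₂v₃ + u₃v₂ + u₄v₁ = 0`.  With `w_{ij} = u_i v_j + u_j v_i` one has
`w₁₄ = w₂₃` and `w₁₄² + w₁₂w₃₄ + w₁₃w₂₄ = 0`.  (Indices are shifted to `0,…,3`.) -/
theorem statement3 (F : Type*) [Field F] [CharP F 2] (u v : Fin 4 → F)
    (h : u 0 * v 3 + u 1 * v 2 + u 2 * v 1 + u 3 * v 0 = 0) :
    (u 0 * v 3 + u 3 * v 0 = u 1 * v 2 + u 2 * v 1) ∧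
    (u 0 * v 3 + u 3 * v 0) ^ 2
      + (u 0 * v 1 + u 1 * v 0) * (u 2 * v 3 + u 3 * v 2)
      + (u 0 * v 2 + u 2 * v 0) * (u 1 * v 3 + u 3 * v 1) = 0 := by
  have isotropic : symplecticForm u v = 0 := by simpa only [symplecticForm, CharTwo.sub_eq_add]
  simpa only [pluckerCoord, CharTwo.sub_eq_add, CharTwo.neg_eq] using
    statement3_general u v isotropic
end

section
/- Let F be a field of characteristic 2 and let (w_{ij})_{1≤i<j≤4} ∈ F⁶ be a nonzero vector with w₁₄ = w₂₃ and w₁₄² + w₁₂w₃₄ + w₁₃w₂₄ = 0. Then there exist linearly independent vectors u, v ∈ F⁴ such that w_{ij} = u_i v_j + u_j v_i for all 1 ≤ i < j ≤ 4, and the 2-dimensional subspace ⟨u,v⟩ is totally isotropic for α (that is, α(u,v) = 0). -/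
/-! With signs restored, the argument works over any field. Regard `(w_{ij})` as the bilinear form
`B = ∑ w_{ij} e_i^* ∧ e_j^*` on `F⁴`. The equation of the Klein quadric,
`w₁₂w₃₄ - w₁₃w₂₄ + w₁₄w₂₃ = 0`, says that the 4-form `½ B ∧ B` vanishes on the standard basis; being
an alternating 4-form on a 4-dimensional space, it vanishes identically. Solving
`(½ B ∧ B)(p, q, x, y) = 0` for `B x y`, where `B p q ≠ 0`, exhibits `B` as `f ∧ g` with
`f = B p / B p q` and `g = B q`; their coordinate vectors are `u` and `v`. The condition
`w₁₄ + w₂₃ = 0` then reads `α(u, v) = 0`. -/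

open LinearMap (BilinForm)
open Module (Dual)

section CommRing

variable {R M : Type*} [CommRing R] [AddCommGroup M] [Module R M]

/-- The alternating form `f ∧ g : (x, y) ↦ f x * g y - g x * f y` of two linear functionals. -/
def dualWedge (f g : Dual R M) : BilinForm R M :=
  BilinForm.linMulLin f g - BilinForm.linMulLin g f

@[simp]
theorem dualWedge_apply (f g : Dual R M) (x y : M) :
    dualWedge f g x y = f x * g y - g x * f y :=
  rfl

theorem isAlt_dualWedge (f g : Dual R M) : (dualWedge f g).IsAlt := fun x => by
  rw [dualWedge_apply, mul_comm, sub_self]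

/-- The `2 × 2` minor of a pair of vectors in the coordinates `i` and `j`, that is, the Plücker
coordinate `p_{ij}` of their span, as a bilinear form. -/
def pluckerForm (R : Type*) [CommRing R] {ι : Type*} (i j : ι) : BilinForm R (ι → R) :=
  dualWedge (LinearMap.proj i) (LinearMap.proj j)

@[simp]
theorem pluckerForm_apply {ι : Type*} (i j : ι) (u v : ι → R) :
    pluckerForm R i j u v = u i * v j - u j * v i :=
  rfl

theorem isAlt_pluckerForm {ι : Type*} (i j : ι) : (pluckerForm R i j).IsAlt :=
  isAlt_dualWedge _ _

theorem linearIndependent_pair_of_isAlt [NoZeroDivisors R] {B : BilinForm R M} (hB : B.IsAlt)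
    {x y : M} (hxy : B x y ≠ 0) : LinearIndependent R ![x, y] := by
  rw [LinearIndependent.pair_iff]
  intro s t hst
  have hs : s * B x y = 0 := by
    simpa [hB.self_eq_zero] using congrArg (B · y) hst
  have ht : t * B x y = 0 := by
    simpa [hB.self_eq_zero] using congrArg (B x) hst
  exact ⟨(mul_eq_zero.mp hs).resolve_right hxy, (mul_eq_zero.mp ht).resolve_right hxy⟩

theorem eq_zero_of_mem_span_pair_of_isAlt {B : BilinForm R M} (hB : B.IsAlt) {u v : M}
    (huv : B u v = 0) {x y : M} (hx : x ∈ Submodule.span R {u, v})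
    (hy : y ∈ Submodule.span R {u, v}) : B x y = 0 := by
  obtain ⟨a, b, rfl⟩ := Submodule.mem_span_pair.mp hx
  obtain ⟨c, d, rfl⟩ := Submodule.mem_span_pair.mp hy
  simp [hB.self_eq_zero, huv, hB.eq_iff.mp huv]

/-- The 4-form `½ B ∧ B` of an alternating form `B`, written without the division by 2. Its value at
four vectors `x 0, …, x 3` is the Pfaffian of their Gram matrix. -/
def pfaffianForm {B : BilinForm R M} (hB : B.IsAlt) : M [⋀^Fin 4]→ₗ[R] R where
  toFun x := B (x 0) (x 1) * B (x 2) (x 3) - B (x 0) (x 2) * B (x 1) (x 3) +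
    B (x 0) (x 3) * B (x 1) (x 2)
  map_update_add' := by
    intro inst x i a b
    obtain rfl := Subsingleton.elim inst (instDecidableEqFin 4)
    fin_cases i <;> simp <;> ring
  map_update_smul' := by
    intro inst x i c a
    obtain rfl := Subsingleton.elim inst (instDecidableEqFin 4)
    fin_cases i <;> simp <;> ring
  map_eq_zero_of_eq' x i j hx hij := by
    have hself := hB.self_eq_zero
    have hneg := hB.neg_eq
    fin_cases i <;> fin_cases j <;> grind

@[simp]
theorem pfaffianForm_apply {B : BilinForm R M} (hB : B.IsAlt) (x : Fin 4 → M) :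
    pfaffianForm hB x = B (x 0) (x 1) * B (x 2) (x 3) - B (x 0) (x 2) * B (x 1) (x 3) +
      B (x 0) (x 3) * B (x 1) (x 2) :=
  rfl

end CommRing

section Field

variable {F : Type*} [Field F]

theorem exists_eq_dualWedge_of_pfaffianForm_eq_zero {V : Type*} [AddCommGroup V] [Module F V]
    {B : BilinForm F V} (hB : B.IsAlt) (hpf : pfaffianForm hB = 0) :
    ∃ f g : Dual F V, B = dualWedge f g := by
  by_cases hzero : B = 0
  · exact ⟨0, 0, by ext; simp [hzero]⟩
  obtain ⟨p, q, hpq⟩ : ∃ p q, B p q ≠ 0 := by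
    contrapose! hzero
    exact LinearMap.ext₂ hzero
  refine ⟨(B p q)⁻¹ • B p, B q, LinearMap.ext₂ fun x y => ?_⟩
  have hplucker : B p q * B x y - B p x * B q y + B p y * B q x = 0 := by
    simpa using DFunLike.congr_fun hpf ![p, q, x, y]
  simp only [dualWedge_apply, LinearMap.smul_apply, smul_eq_mul]
  field_simp
  linear_combination hplucker

theorem exists_pluckerCoordinates_eq {w01 w02 w03 w12 w13 w23 : F}
    (hquad : w01 * w23 - w02 * w13 + w03 * w12 = 0) :
    ∃ u v : Fin 4 → F,
      w01 = u 0 * v 1 - u 1 * v 0 ∧ w02 = u 0 * v 2 - u 2 * v 0 ∧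
      w03 = u 0 * v 3 - u 3 * v 0 ∧ w12 = u 1 * v 2 - u 2 * v 1 ∧
      w13 = u 1 * v 3 - u 3 * v 1 ∧ w23 = u 2 * v 3 - u 3 * v 2 := by
  let ω := pluckerForm F (ι := Fin 4)
  let B := w01 • ω 0 1 + w02 • ω 0 2 + w03 • ω 0 3 + w12 • ω 1 2 + w13 • ω 1 3 + w23 • ω 2 3
  let e := Pi.basisFun F (Fin 4)
  have hB : B.IsAlt := fun x => by simp [B, ω, mul_comm]
  have hpf : pfaffianForm hB = 0 := by
    rw [← AlternatingMap.map_basis_eq_zero_iff e]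
    simpa [B, ω, e] using hquad
  obtain ⟨f, g, hfg⟩ := exists_eq_dualWedge_of_pfaffianForm_eq_zero hB hpf
  have hminor (i j : Fin 4) : B (e i) (e j) = f (e i) * g (e j) - f (e j) * g (e i) := by
    rw [hfg, dualWedge_apply, mul_comm (g _)]
  refine ⟨f ∘ e, g ∘ e, ?_⟩
  simp only [Function.comp_apply, ← hminor]
  simp [B, ω, e]

end Field

theorem statement4_general (F : Type*) [Field F]
    (w01 w02 w03 w12 w13 w23 : F)
    (hne : ¬ (w01 = 0 ∧ w02 = 0 ∧ w03 = 0 ∧ w12 = 0 ∧ w13 = 0 ∧ w23 = 0))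
    (hsub : w03 + w12 = 0)
    (hquad : w01 * w23 - w02 * w13 + w03 * w12 = 0) :
    ∃ u v : Fin 4 → F, LinearIndependent F ![u, v] ∧
      w01 = u 0 * v 1 - u 1 * v 0 ∧
      w02 = u 0 * v 2 - u 2 * v 0 ∧
      w03 = u 0 * v 3 - u 3 * v 0 ∧
      w12 = u 1 * v 2 - u 2 * v 1 ∧
      w13 = u 1 * v 3 - u 3 * v 1 ∧
      w23 = u 2 * v 3 - u 3 * v 2 ∧
      (∀ x ∈ Submodule.span F {u, v}, ∀ y ∈ Submodule.span F {u, v},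
        x 0 * y 3 + x 1 * y 2 - x 2 * y 1 - x 3 * y 0 = 0) ∧
      u 0 * v 3 + u 1 * v 2 - u 2 * v 1 - u 3 * v 0 = 0 := by
  obtain ⟨u, v, h01, h02, h03, h12, h13, h23⟩ := exists_pluckerCoordinates_eq hquad
  have hindep : LinearIndependent F ![u, v] := by
    by_contra hdep
    have hminor (i j : Fin 4) : u i * v j - u j * v i = 0 :=
      of_not_not fun h => hdep (linearIndependent_pair_of_isAlt (isAlt_pluckerForm i j) h)
    exact hne (by simp only [h01, h02, h03, h12, h13, h23, hminor, and_self])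
  let α := pluckerForm F (0 : Fin 4) 3 + pluckerForm F 1 2
  have hα : α.IsAlt := (isAlt_pluckerForm 0 3).add (isAlt_pluckerForm 1 2)
  have hαuv : α u v = 0 := by
    simpa [α, ← h03, ← h12] using hsub
  have hiso {x y : Fin 4 → F} (hx : x ∈ Submodule.span F {u, v})
      (hy : y ∈ Submodule.span F {u, v}) : x 0 * y 3 + x 1 * y 2 - x 2 * y 1 - x 3 * y 0 = 0 := by
    have hαxy : α x y = 0 := eq_zero_of_mem_span_pair_of_isAlt hα hαuv hx hy
    simp only [α, LinearMap.add_apply, pluckerForm_apply] at hαxy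
    linear_combination hαxy
  exact ⟨u, v, hindep, h01, h02, h03, h12, h13, h23, fun x hx y hy => hiso hx hy,
    hiso (Submodule.mem_span_of_mem (by simp)) (Submodule.mem_span_of_mem (by simp))⟩

/-- Let `F` be a field of characteristic 2 and `(w_{ij})_{1≤i<j≤4} ∈ F⁶` a nonzero
vector with `w₁₄ = w₂₃` and `w₁₄² + w₁₂w₃₄ + w₁₃w₂₄ = 0`.  Then there are linearly independent
`u, v ∈ F⁴` with `w_{ij} = u_i v_j + u_j v_i` for all `1 ≤ i < j ≤ 4` such that the plane
`⟨u,v⟩` is totally isotropic for the alternating form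
`α(x,y) = x₁y₄ + x₂y₃ + x₃y₂ + x₄y₁` (that is, `α(u,v) = 0`).  (Indices shifted to `0,…,3`.) -/
theorem statement4 (F : Type*) [Field F] [CharP F 2]
    (w01 w02 w03 w12 w13 w23 : F)
    (hne : ¬ (w01 = 0 ∧ w02 = 0 ∧ w03 = 0 ∧ w12 = 0 ∧ w13 = 0 ∧ w23 = 0))
    (hsub : w03 = w12)
    (hquad : w03 ^ 2 + w01 * w23 + w02 * w13 = 0) :
    ∃ u v : Fin 4 → F, LinearIndependent F ![u, v] ∧
      w01 = u 0 * v 1 + u 1 * v 0 ∧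
      w02 = u 0 * v 2 + u 2 * v 0 ∧
      w03 = u 0 * v 3 + u 3 * v 0 ∧
      w12 = u 1 * v 2 + u 2 * v 1 ∧
      w13 = u 1 * v 3 + u 3 * v 1 ∧
      w23 = u 2 * v 3 + u 3 * v 2 ∧
      (∀ x ∈ Submodule.span F {u, v}, ∀ y ∈ Submodule.span F {u, v},
        x 0 * y 3 + x 1 * y 2 + x 2 * y 1 + x 3 * y 0 = 0) ∧
      u 0 * v 3 + u 1 * v 2 + u 2 * v 1 + u 3 * v 0 = 0 := by
  subst hsub
  simpa [CharTwo.sub_eq_add] using statement4_general F w01 w02 w03 w03 w13 w23 hne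
    (CharTwo.add_self_eq_zero w03) (by rw [CharTwo.sub_eq_add, ← hquad]; ring)
end

section
/- Let F be a field of characteristic 2 and p ∈ F⁴ a nonzero vector. Consider the set of all 2-dimensional subspaces of F⁴ that contain p and are totally isotropic for α, and for each such subspace ⟨p,v⟩ form the nucleus vector w(p,v) ∈ F⁶. Then the set of 1-dimensional subspaces {⟨w(p,v)⟩ : ⟨p,v⟩ totally isotropic, v ∉ ⟨p⟩} is exactly the set of all 1-dimensional subspaces of a single 2-dimensional subspace of F⁶; that is, the nuclei of the conics coming from the pencil of totally isotropic lines through ⟨p⟩ form the point set of a projective line. -/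
/-- The nucleus vector `w(u,v) ∈ F⁶`, with coordinates
`w_{01}, w_{02}, w_{03}, w_{12}, w_{13}, w_{23}` where `w_{ij} = u_i v_j + u_j v_i`. -/
def wvec (F : Type*) [Field F] (u v : Fin 4 → F) : Fin 6 → F :=
  ![u 0 * v 1 + u 1 * v 0, u 0 * v 2 + u 2 * v 0, u 0 * v 3 + u 3 * v 0,
    u 1 * v 2 + u 2 * v 1, u 1 * v 3 + u 3 * v 1, u 2 * v 3 + u 3 * v 2]

open Module LinearMap

theorem finrank_map_add_finrank_ker_of_ker_le {K V W : Type*} [DivisionRing K]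
    [AddCommGroup V] [Module K V] [AddCommGroup W] [Module K W] {f : V →ₗ[K] W}
    {U : Submodule K V} [FiniteDimensional K U] (hU : ker f ≤ U) :
    finrank K (U.map f) + finrank K (ker f) = finrank K U := by
  rw [← range_domRestrict, ← (Submodule.comapSubtypeEquivOfLe hU).finrank_eq, ← ker_domRestrict]
  exact finrank_range_add_finrank_ker (f.domRestrict U)

theorem setOf_span_singleton_apply_eq_setOf_span_singleton_map {R M M₂ : Type*} [Semiring R]
    [AddCommMonoid M] [Module R M] [AddCommMonoid M₂] [Module R M₂] (f : M →ₗ[R] M₂)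
    (U : Submodule R M) :
    {N | ∃ v ∈ U, v ∉ ker f ∧ N = Submodule.span R {f v}} =
      {N | ∃ x ∈ U.map f, x ≠ 0 ∧ N = Submodule.span R {x}} := by
  ext N
  simp [Submodule.mem_map]

theorem mem_span_singleton_iff_forall_mul_eq {ι K : Type*} [Semifield K] {u v : ι → K}
    (hu : u ≠ 0) : v ∈ Submodule.span K {u} ↔ ∀ i j, u i * v j = u j * v i := by
  rw [Submodule.mem_span_singleton]
  constructor
  · rintro ⟨a, rfl⟩ i j
    simp only [Pi.smul_apply, smul_eq_mul]
    ring
  · intro h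
    obtain ⟨i, hi⟩ : ∃ i, u i ≠ 0 := Function.ne_iff.mp hu
    refine ⟨v i / u i, funext fun j => ?_⟩
    rw [Pi.smul_apply, smul_eq_mul, div_mul_eq_mul_div, div_eq_iff hi, mul_comm, ← h i j, mul_comm]

section NucleusLine

variable (F : Type*) [Field F]

/-- The form `α` of `alphaForm`, bundled as a bilinear form. -/
def alphaBilin : LinearMap.BilinForm F (Fin 4 → F) :=
  mk₂ F (alphaForm F)
    (fun _ _ _ => by simp only [alphaForm, Pi.add_apply]; ring)
    (fun _ _ _ => by simp only [alphaForm, Pi.smul_apply, smul_eq_mul]; ring)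
    (fun _ _ _ => by simp only [alphaForm, Pi.add_apply]; ring)
    (fun _ _ _ => by simp only [alphaForm, Pi.smul_apply, smul_eq_mul]; ring)

/-- The nucleus vector `w` of `wvec`, bundled as a bilinear map. -/
def wvecBilin : (Fin 4 → F) →ₗ[F] (Fin 4 → F) →ₗ[F] (Fin 6 → F) :=
  mk₂ F (wvec F)
    (fun _ _ _ => by ext i; fin_cases i <;> simp [wvec] <;> ring)
    (fun _ _ _ => by ext i; fin_cases i <;> simp [wvec] <;> ring)
    (fun _ _ _ => by ext i; fin_cases i <;> simp [wvec] <;> ring)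
    (fun _ _ _ => by ext i; fin_cases i <;> simp [wvec] <;> ring)

variable {F}

theorem alphaForm_single_one (x : Fin 4 → F) (i : Fin 4) :
    alphaForm F x (Pi.single i 1) = x i.rev := by
  fin_cases i <;> simp [alphaForm]

theorem separatingLeft_alphaBilin : (alphaBilin F).SeparatingLeft := by
  intro x hx
  ext i
  calc x i = alphaForm F x (Pi.single i.rev 1) := by rw [alphaForm_single_one, Fin.rev_rev]
    _ = 0 := hx _

section CharTwo

variable [CharP F 2]

theorem isAlt_alphaBilin : (alphaBilin F).IsAlt := by
  intro x
  calc alphaForm F x x = 2 * (x 0 * x 3 + x 1 * x 2) := by rw [alphaForm]; ring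
    _ = 0 := by rw [CharTwo.two_eq_zero, zero_mul]

theorem wvec_eq_zero_iff_forall_mul_eq {u v : Fin 4 → F} :
    wvec F u v = 0 ↔ ∀ i j, u i * v j = u j * v i := by
  have coordinates : wvec F u v = 0 ↔
      u 0 * v 1 = u 1 * v 0 ∧ u 0 * v 2 = u 2 * v 0 ∧ u 0 * v 3 = u 3 * v 0 ∧
        u 1 * v 2 = u 2 * v 1 ∧ u 1 * v 3 = u 3 * v 1 ∧ u 2 * v 3 = u 3 * v 2 := by
    simp [wvec, funext_iff, Fin.forall_fin_succ, CharTwo.add_eq_zero]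
  rw [coordinates]
  constructor
  · rintro ⟨h01, h02, h03, h12, h13, h23⟩ i j
    fin_cases i <;> fin_cases j <;> simp [*]
  · intro h
    exact ⟨h 0 1, h 0 2, h 0 3, h 1 2, h 1 3, h 2 3⟩

theorem ker_wvecBilin {p : Fin 4 → F} (hp : p ≠ 0) :
    ker (wvecBilin F p) = Submodule.span F {p} := by
  ext v
  rw [mem_span_singleton_iff_forall_mul_eq hp, ← wvec_eq_zero_iff_forall_mul_eq]
  rfl

end CharTwo

variable (F) in
/-- The image in `F⁶` of the hyperplane `p^⊥` under `w(p, ·)`. For `p ≠ 0` in characteristic 2 this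
is the projective line formed by the nuclei of the pencil through `p`. -/
def nucleusLine (p : Fin 4 → F) : Submodule F (Fin 6 → F) :=
  (ker (alphaBilin F p)).map (wvecBilin F p)

theorem finrank_nucleusLine [CharP F 2] {p : Fin 4 → F} (hp : p ≠ 0) :
    finrank F (nucleusLine F p) = 2 := by
  have ker_le : ker (wvecBilin F p) ≤ ker (alphaBilin F p) := by
    rw [ker_wvecBilin hp, Submodule.span_singleton_le_iff_mem]
    exact isAlt_alphaBilin p
  have alpha_ne_zero : alphaBilin F p ≠ 0 := fun h =>
    hp (separatingLeft_alphaBilin p fun y => LinearMap.congr_fun h y)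
  have finrank_perp : finrank F (ker (alphaBilin F p)) + 1 = 4 := by
    simpa using Dual.finrank_ker_add_one_of_ne_zero alpha_ne_zero
  have finrank_ker : finrank F (ker (wvecBilin F p)) = 1 := by
    rw [ker_wvecBilin hp, finrank_span_singleton hp]
  have finrank_image : finrank F (nucleusLine F p) + finrank F (ker (wvecBilin F p)) =
      finrank F (ker (alphaBilin F p)) := finrank_map_add_finrank_ker_of_ker_le ker_le
  lia

end NucleusLine

/-- for a field `F` of characteristic 2 and a nonzero `p ∈ F⁴`, the nuclei of the
conics coming from the pencil of totally isotropic lines through `⟨p⟩` form the point set of a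
projective line: the set of `1`-dimensional subspaces `⟨w(p,v)⟩`, for `⟨p,v⟩` ranging over the
totally isotropic `2`-subspaces through `p`, is exactly the set of `1`-dimensional subspaces of
a single `2`-dimensional subspace `M` of `F⁶`. -/
theorem statement5 (F : Type*) [Field F] [CharP F 2] (p : Fin 4 → F) (hp : p ≠ 0) :
    ∃ M : Submodule F (Fin 6 → F), Module.finrank F ↥M = 2 ∧
      {N : Submodule F (Fin 6 → F) | ∃ v : Fin 4 → F,
          alphaForm F p v = 0 ∧ v ∉ Submodule.span F {p} ∧
          N = Submodule.span F {wvec F p v}}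
        = {N : Submodule F (Fin 6 → F) | ∃ x ∈ M, x ≠ 0 ∧ N = Submodule.span F {x}} := by
  refine ⟨nucleusLine F p, finrank_nucleusLine hp, ?_⟩
  rw [nucleusLine, ← setOf_span_singleton_apply_eq_setOf_span_singleton_map, ker_wvecBilin hp]
  rfl
end

section
/- Let F be a field with more than 2 elements and d ≥ 1 an integer. Let Γ be the point-line geometry PG(d,F), whose points are the 1-dimensional subspaces of F^{d+1} and whose lines are the point sets of the 2-dimensional subspaces of F^{d+1}. Then the 3-generating rank of Γ equals (d+2 choose 2), i.e. grk₃(PG(d,F)) = (d+1)(d+2)/2. -/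
open Cardinal

/-- `S` is a 3-subspace of the point-line geometry with line set `L`: every line having at
least three points in `S` is contained in `S`. -/
def Is3Subspace {P : Type*} (L : Set (Set P)) (S : Set P) : Prop :=
  ∀ l ∈ L, (∃ x ∈ l ∩ S, ∃ y ∈ l ∩ S, ∃ z ∈ l ∩ S, x ≠ y ∧ x ≠ z ∧ y ≠ z) → l ⊆ S

/-- The 3-span of `X`: the smallest 3-subspace containing `X`. -/
def ThreeSpan {P : Type*} (L : Set (Set P)) (X : Set P) : Set P :=
  ⋂₀ {S | Is3Subspace L S ∧ X ⊆ S}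

/-- `X` 3-generates the geometry when its 3-span is the whole point set. -/
def ThreeGenerates {P : Type*} (L : Set (Set P)) (X : Set P) : Prop :=
  ThreeSpan L X = Set.univ

/-- The 3-generating rank: the minimum cardinality of a 3-generating set. -/
noncomputable def grk3 {P : Type*} (L : Set (Set P)) : Cardinal :=
  sInf {c : Cardinal | ∃ X : Set P, ThreeGenerates L X ∧ #↥X = c}

/-- The points of `PG(n-1,F)`: the 1-dimensional subspaces of `F^n`. -/
def PGPoint (F : Type*) [Field F] (n : ℕ) :=
  {W : Submodule F (Fin n → F) // Module.finrank F ↥W = 1}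

/-- The lines of `PG(n-1,F)`: the point sets of the 2-dimensional subspaces of `F^n`. -/
def PGLines (F : Type*) [Field F] (n : ℕ) : Set (Set (PGPoint F n)) :=
  {S | ∃ W : Submodule F (Fin n → F), Module.finrank F ↥W = 2 ∧
    S = {p : PGPoint F n | p.1 ≤ W}}

/-!
Cones over 3-subspaces are the sets of vectors that contain `0` and contain every `a • v + b • w`
as soon as they contain `v`, `w` and `v + w`. A quadratic map `Q` satisfies
`Q (a • v + b • w) = a² • Q v + b² • Q w + ab • (Q (v + w) - Q v - Q w)`, so the preimage of a
subspace under `Q` is such a cone. For the quadratic Veronese map `v ↦ (v i * v j)`, whose image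
spans a space of dimension `(n + 1).choose 2`, it follows that a 3-generating set must have
a spanning image, which is the lower bound.

Conversely, the points `⟨e i⟩` and `⟨e i + e j⟩` 3-generate. Suppose the cone contains a subspace
`H`, a vector `e`, and `e + b` for each `b` in a spanning set of `H`. The vectors `v ∈ H` with
`e + v` in the cone are closed under affine combinations, since differences of such vectors lie in
`H`, and contain `0`. As soon as the field has an element `t ≠ 0, 1`, affine combinations through
`0` yield sums, `u + v = t • (t⁻¹ • u) + (1 - t) • ((1 - t)⁻¹ • v)`, so these vectors are all of
`H`, and the cone contains the span of `H` and `e`.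
-/

/-- A subset `C` of a module is three-closed if it contains `0` and, whenever it contains `v`, `w`
and `v + w`, it contains all linear combinations of `v` and `w`. Over a field these are exactly the
cones over the 3-subspaces of the projective space; allowing `v` and `w` to be proportional makes
closure under scalar multiplication part of the condition. -/
structure IsThreeClosed (R : Type*) {M : Type*} [Semiring R] [AddCommMonoid M] [Module R M]
    (C : Set M) : Prop where
  zero_mem : 0 ∈ C
  smul_add_smul_mem {v w : M} : v ∈ C → w ∈ C → v + w ∈ C → ∀ a b : R, a • v + b • w ∈ C

namespace IsThreeClosed

theorem smul_mem {R M : Type*} [Semiring R] [AddCommMonoid M] [Module R M] {C : Set M}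
    (hC : IsThreeClosed R C) {v : M} (hv : v ∈ C) (a : R) : a • v ∈ C := by
  simpa using hC.smul_add_smul_mem hv hC.zero_mem (by rwa [add_zero]) a 0

theorem preimage_quadraticMap {R M N : Type*} [CommRing R] [AddCommGroup M] [AddCommGroup N]
    [Module R M] [Module R N] (Q : QuadraticMap R M N) (U : Submodule R N) :
    IsThreeClosed R (Q ⁻¹' U) where
  zero_mem := by simp
  smul_add_smul_mem {v w} hv hw hvw a b := by
    have hpolar : QuadraticMap.polar Q v w ∈ U := U.sub_mem (U.sub_mem hvw hv) hw
    rw [Set.mem_preimage, SetLike.mem_coe, QuadraticMap.map_add Q, QuadraticMap.map_smul,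
      QuadraticMap.map_smul, QuadraticMap.polar_smul_left, QuadraticMap.polar_smul_right]
    exact U.add_mem (U.add_mem (U.smul_mem _ hv) (U.smul_mem _ hw))
      (U.smul_mem _ (U.smul_mem _ hpolar))

section DivisionRing

variable {K V : Type*} [DivisionRing K] [AddCommGroup V] [Module K V] {C : Set V}

theorem add_mem_of_mem_span {t : K} (ht₀ : t ≠ 0) (ht₁ : t ≠ 1) (hC : IsThreeClosed K C)
    {B : Set V} {e : V} (hBC : (Submodule.span K B : Set V) ⊆ C) (he : e ∈ C)
    (heB : ∀ b ∈ B, e + b ∈ C) {v : V} (hv : v ∈ Submodule.span K B) : e + v ∈ C := by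
  set H := Submodule.span K B
  have affine_comb {u w : V} (hu : u ∈ H) (hw : w ∈ H) (heu : e + u ∈ C) (hew : e + w ∈ C)
      (s : K) : e + (s • u + (1 - s) • w) ∈ C := by
    have hneg : -(e + w) ∈ C := by
      simpa only [neg_one_smul] using hC.smul_mem hew (-1 : K)
    have hsum : e + u + -(e + w) ∈ C := by
      rw [← sub_eq_add_neg, add_sub_add_left_eq_sub]
      exact hBC (H.sub_mem hu hw)
    convert hC.smul_add_smul_mem heu hneg hsum s (s - 1) using 1
    simp only [smul_add, smul_neg, sub_smul, one_smul]
    abel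
  have add_smul {u : V} (hu : u ∈ H) (heu : e + u ∈ C) (s : K) : e + s • u ∈ C := by
    simpa using affine_comb hu H.zero_mem heu (by rwa [add_zero]) s
  induction hv using Submodule.span_induction with
  | mem b hb => exact heB b hb
  | zero => rwa [add_zero]
  | smul s u hu heu => exact add_smul hu heu s
  | add u w hu hw heu hew =>
    have := affine_comb (H.smul_mem t⁻¹ hu) (H.smul_mem (1 - t)⁻¹ hw) (add_smul hu heu _)
      (add_smul hw hew _) t
    rwa [smul_inv_smul₀ ht₀, smul_inv_smul₀ (sub_ne_zero.2 ht₁.symm)] at this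

theorem span_insert_subset {t : K} (ht₀ : t ≠ 0) (ht₁ : t ≠ 1) (hC : IsThreeClosed K C)
    {B : Set V} {e : V} (hBC : (Submodule.span K B : Set V) ⊆ C) (he : e ∈ C)
    (heB : ∀ b ∈ B, e + b ∈ C) : (Submodule.span K (insert e B) : Set V) ⊆ C := by
  intro v hv
  obtain ⟨a, u, hu, rfl⟩ := Submodule.mem_span_insert.1 hv
  obtain rfl | ha := eq_or_ne a 0
  · simpa using hBC hu
  · have := hC.smul_mem (hC.add_mem_of_mem_span ht₀ ht₁ hBC he heB
      (Submodule.smul_mem _ a⁻¹ hu)) a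
    rwa [smul_add, smul_inv_smul₀ ha] at this

theorem span_subset {t : K} (ht₀ : t ≠ 0) (ht₁ : t ≠ 1) (hC : IsThreeClosed K C) {B : Set V}
    (hB : B ⊆ C) (hBB : B.Pairwise fun b c ↦ b + c ∈ C) : (Submodule.span K B : Set V) ⊆ C := by
  classical
  intro v hv
  obtain ⟨s, hsB, hvs⟩ := Submodule.mem_span_finite_of_mem_span hv
  suffices (Submodule.span K (s : Set V) : Set V) ⊆ C from this hvs
  clear hvs
  induction s using Finset.induction_on with
  | empty => simpa using hC.zero_mem
  | insert e s hes ih =>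
    rw [Finset.coe_insert, Set.insert_subset_iff] at hsB
    rw [Finset.coe_insert]
    refine hC.span_insert_subset ht₀ ht₁ (ih hsB.2) (hB hsB.1) fun b hb ↦ ?_
    exact hBB hsB.1 (hsB.2 hb) (by rintro rfl; exact hes hb)

end DivisionRing

end IsThreeClosed

namespace PGPoint

variable {F : Type*} [Field F] {n : ℕ}

/-- The projective point spanned by a nonzero vector. -/
def mk (v : Fin n → F) (hv : v ≠ 0) : PGPoint F n :=
  ⟨Submodule.span F {v}, finrank_span_singleton hv⟩

theorem mem_mk {v : Fin n → F} (hv : v ≠ 0) : v ∈ (mk v hv).1 :=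
  Submodule.mem_span_singleton_self v

theorem isAtom (p : PGPoint F n) : IsAtom p.1 :=
  Submodule.isAtom_iff_finrank_eq_one.2 p.2

theorem exists_eq_mk (p : PGPoint F n) : ∃ (v : Fin n → F) (hv : v ≠ 0), p = mk v hv := by
  obtain ⟨v, hv, hpv⟩ := (atom_iff_nonzero_span p.1).1 p.isAtom
  exact ⟨v, hv, Subtype.ext hpv⟩

theorem eq_mk_of_mem {p : PGPoint F n} {v : Fin n → F} (hv : v ≠ 0) (h : v ∈ p.1) :
    p = mk v hv :=
  Subtype.ext (Submodule.eq_of_le_of_finrank_eq ((Submodule.span_singleton_le_iff_mem _ _).2 h)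
    ((mk v hv).2.trans p.2.symm)).symm

theorem finrank_sup_of_ne {p q : PGPoint F n} (h : p ≠ q) :
    Module.finrank F ↥(p.1 ⊔ q.1) = 2 := by
  have hdisj : p.1 ⊓ q.1 = ⊥ := (IsAtom.disjoint_of_ne p.isAtom q.isAtom
    (Subtype.coe_injective.ne h)).eq_bot
  have := Submodule.finrank_sup_add_finrank_inf_eq p.1 q.1
  rwa [hdisj, finrank_bot, add_zero, p.2, q.2] at this

end PGPoint

section ProjectiveSpace

variable {F : Type*} [Field F] {n : ℕ}

/-- The cone over a set of projective points, as a set of vectors. The zero vector always belongs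
to it, since it spans no point. -/
def coneOver (S : Set (PGPoint F n)) : Set (Fin n → F) :=
  {v | ∀ hv : v ≠ 0, PGPoint.mk v hv ∈ S}

theorem IsThreeClosed.is3Subspace {C : Set (Fin n → F)} (hC : IsThreeClosed F C) :
    Is3Subspace (PGLines F n) {p | (p.1 : Set (Fin n → F)) ⊆ C} := by
  rintro _ ⟨W, hW, rfl⟩ ⟨x, ⟨hxW, hxC⟩, y, ⟨hyW, hyC⟩, z, ⟨hzW, hzC⟩, hxy, hxz, hyz⟩ p hp v hv
  have hsup : W = x.1 ⊔ y.1 := (Submodule.eq_of_le_of_finrank_eq (sup_le hxW hyW)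
    ((PGPoint.finrank_sup_of_ne hxy).trans hW.symm)).symm
  obtain ⟨w, hw, rfl⟩ := z.exists_eq_mk
  obtain ⟨u, hux, u', huy, rfl⟩ := Submodule.mem_sup.1 (hsup ▸ hzW (PGPoint.mem_mk hw))
  have hu : u ≠ 0 := by
    rintro rfl
    exact hyz (PGPoint.eq_mk_of_mem hw (by rwa [zero_add]))
  have hu' : u' ≠ 0 := by
    rintro rfl
    exact hxz (PGPoint.eq_mk_of_mem hw (by rwa [add_zero]))
  obtain ⟨_, hvx, _, hvy, rfl⟩ := Submodule.mem_sup.1 (hsup ▸ hp hv)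
  obtain ⟨a, rfl⟩ := Submodule.mem_span_singleton.1 (PGPoint.eq_mk_of_mem hu hux ▸ hvx)
  obtain ⟨b, rfl⟩ := Submodule.mem_span_singleton.1 (PGPoint.eq_mk_of_mem hu' huy ▸ hvy)
  exact hC.smul_add_smul_mem (hxC hux) (hyC huy) (hzC (PGPoint.mem_mk hw)) a b

theorem smul_mem_coneOver {S : Set (PGPoint F n)} {v : Fin n → F} (hv : v ∈ coneOver S) (a : F) :
    a • v ∈ coneOver S := by
  intro hav
  have hv₀ : v ≠ 0 := right_ne_zero_of_smul hav
  rw [← PGPoint.eq_mk_of_mem (p := .mk v hv₀) hav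
    (Submodule.smul_mem _ a (PGPoint.mem_mk hv₀))]
  exact hv hv₀

theorem Is3Subspace.isThreeClosed_coneOver {S : Set (PGPoint F n)}
    (hS : Is3Subspace (PGLines F n) S) : IsThreeClosed F (coneOver S) where
  zero_mem h := absurd rfl h
  smul_add_smul_mem {v w} hv hw hvw a b := by
    obtain rfl | hv₀ := eq_or_ne v 0
    · simpa using smul_mem_coneOver hw b
    by_cases hwv : w ∈ (PGPoint.mk v hv₀).1
    · obtain ⟨c, rfl⟩ := Submodule.mem_span_singleton.1 hwv
      rw [smul_smul, ← add_smul]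
      exact smul_mem_coneOver hv _
    have hw₀ : w ≠ 0 := by
      rintro rfl
      exact hwv (Submodule.zero_mem _)
    have hvw₀ : v + w ≠ 0 := by
      intro h
      exact hwv (eq_neg_of_add_eq_zero_right h ▸ Submodule.neg_mem _ (PGPoint.mem_mk hv₀))
    set p := PGPoint.mk v hv₀
    set q := PGPoint.mk w hw₀
    set r := PGPoint.mk (v + w) hvw₀
    have hvp : v ∈ p.1 := PGPoint.mem_mk hv₀
    have hwq : w ∈ q.1 := PGPoint.mem_mk hw₀
    have hvwr : v + w ∈ r.1 := PGPoint.mem_mk hvw₀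
    have hpq : p ≠ q := fun h ↦ hwv (h ▸ hwq)
    have hpr : p ≠ r := fun h ↦ hwv ((Submodule.add_mem_iff_right _ hvp).1 (h ▸ hvwr))
    have hqr : q ≠ r := fun h ↦
      hpq (PGPoint.eq_mk_of_mem hv₀ ((Submodule.add_mem_iff_left _ hwq).1 (h ▸ hvwr))).symm
    have hrpq : r.1 ≤ p.1 ⊔ q.1 := (Submodule.span_singleton_le_iff_mem _ _).2
      (Submodule.add_mem_sup hvp hwq)
    have hline : {x : PGPoint F n | x.1 ≤ p.1 ⊔ q.1} ⊆ S :=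
      hS _ ⟨_, PGPoint.finrank_sup_of_ne hpq, rfl⟩ ⟨p, ⟨le_sup_left (b := q.1), hv hv₀⟩,
        q, ⟨le_sup_right (a := p.1), hw hw₀⟩, r, ⟨hrpq, hvw hvw₀⟩, hpq, hpr, hqr⟩
    exact fun _ ↦ hline ((Submodule.span_singleton_le_iff_mem _ _).2
      (Submodule.add_mem_sup (Submodule.smul_mem _ a hvp) (Submodule.smul_mem _ b hwq)))

theorem threeGenerates_iff {X : Set (PGPoint F n)} :
    ThreeGenerates (PGLines F n) X ↔ ∀ C : Set (Fin n → F), IsThreeClosed F C →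
      (∀ p ∈ X, (p.1 : Set (Fin n → F)) ⊆ C) → C = Set.univ := by
  simp only [ThreeGenerates, ThreeSpan, Set.eq_univ_iff_forall]
  constructor
  · intro hX C hC hXC v
    obtain rfl | hv := eq_or_ne v 0
    · exact hC.zero_mem
    · exact hX (.mk v hv) _ ⟨hC.is3Subspace, hXC⟩ (PGPoint.mem_mk hv)
  · rintro hX p S ⟨hS, hXS⟩
    obtain ⟨v, hv, rfl⟩ := p.exists_eq_mk
    refine hX _ hS.isThreeClosed_coneOver (fun p hp u hu hu₀ ↦ ?_) v hv
    exact PGPoint.eq_mk_of_mem hu₀ hu ▸ hXS hp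

theorem ThreeGenerates.span_range_quadraticMap_eq {N : Type*} [AddCommGroup N] [Module F N]
    (Q : QuadraticMap F (Fin n → F) N) {X : Set (PGPoint F n)}
    (hX : ThreeGenerates (PGLines F n) X) {r : X → Fin n → F}
    (hr : ∀ p : X, p.1.1 = Submodule.span F {r p}) :
    Submodule.span F (Set.range Q) = Submodule.span F (Set.range (Q ∘ r)) := by
  set U := Submodule.span F (Set.range (Q ∘ r))
  apply le_antisymm _ (Submodule.span_mono (Set.range_comp_subset_range r Q))
  have hQU : Q ⁻¹' U = Set.univ := by
    refine threeGenerates_iff.1 hX _ (.preimage_quadraticMap Q U) fun p hp v hv ↦ ?_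
    obtain ⟨a, rfl⟩ := Submodule.mem_span_singleton.1 (hr ⟨p, hp⟩ ▸ hv)
    rw [Set.mem_preimage, QuadraticMap.map_smul]
    exact U.smul_mem _ (Submodule.subset_span ⟨_, rfl⟩)
  rw [Submodule.span_le]
  rintro _ ⟨v, rfl⟩
  exact hQU.ge (Set.mem_univ v)

end ProjectiveSpace

section Veronese

variable {R ι : Type*} [CommRing R]

/-- The quadratic Veronese map, sending `v` to the family of all its quadratic monomials
`v i * v j`, indexed by unordered pairs. -/
def veroneseMap : QuadraticMap R (ι → R) (Sym2 ι → R) :=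
  .ofPolar (fun v s ↦ (s.map v).mul)
    (fun a v ↦ by
      ext s
      induction s with | _ i j
      change a * v i * (a * v j) = a * a * (v i * v j)
      ring)
    (fun u v w ↦ by
      ext s
      induction s with | _ i j
      simp only [QuadraticMap.polar, Pi.add_apply, Pi.sub_apply, Sym2.map_mk, Sym2.mul_mk]
      ring)
    (fun a v w ↦ by
      ext s
      induction s with | _ i j
      simp only [QuadraticMap.polar, Pi.add_apply, Pi.sub_apply, Pi.smul_apply, smul_eq_mul,
        Sym2.map_mk, Sym2.mul_mk]
      ring)

theorem veroneseMap_apply_mk (v : ι → R) (i j : ι) : veroneseMap v s(i, j) = v i * v j :=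
  rfl

theorem span_range_veroneseMap [Finite ι] :
    Submodule.span R (Set.range (veroneseMap (R := R) (ι := ι))) = ⊤ := by
  classical
  set U := Submodule.span R (Set.range (veroneseMap (R := R) (ι := ι)))
  have veronese_mem (v : ι → R) : veroneseMap v ∈ U := Submodule.subset_span ⟨v, rfl⟩
  rw [← top_le_iff, ← (Pi.basisFun R (Sym2 ι)).span_eq, Submodule.span_le]
  rintro _ ⟨s, rfl⟩
  induction s with | _ i j
  rw [Pi.basisFun_apply, SetLike.mem_coe]
  obtain rfl | hij := eq_or_ne i j
  · convert veronese_mem (Pi.single i 1)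
    ext s
    induction s with | _ k l
    simp only [veroneseMap_apply_mk, Pi.single_apply, Sym2.eq_iff]
    grind
  · have hpolar := U.sub_mem (U.sub_mem (veronese_mem (Pi.single i 1 + Pi.single j 1))
      (veronese_mem (Pi.single i 1))) (veronese_mem (Pi.single j 1))
    convert hpolar
    ext s
    induction s with | _ k l
    simp only [veroneseMap_apply_mk, Pi.single_apply, Pi.add_apply, Pi.sub_apply, Sym2.eq_iff]
    grind

end Veronese

section Rank

variable {P : Type*} {L : Set (Set P)}

theorem grk3_le_mk {X : Set P} (hX : ThreeGenerates L X) : grk3 L ≤ #X :=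
  csInf_le' ⟨X, hX, rfl⟩

theorem threeGenerates_univ : ThreeGenerates L Set.univ :=
  Set.eq_univ_iff_forall.2 fun p _ hS ↦ hS.2 (Set.mem_univ p)

theorem le_grk3 {c : Cardinal} (h : ∀ X : Set P, ThreeGenerates L X → c ≤ #X) : c ≤ grk3 L := by
  refine le_csInf ⟨_, Set.univ, threeGenerates_univ, rfl⟩ ?_
  rintro _ ⟨X, hX, rfl⟩
  exact h X hX

end Rank

section GeneratingRank

variable {F : Type*} [Field F] {n : ℕ}

theorem ThreeGenerates.choose_le_mk {X : Set (PGPoint F n)}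
    (hX : ThreeGenerates (PGLines F n) X) : ((n + 1).choose 2 : Cardinal) ≤ #X := by
  choose r _ hr using fun p : X ↦ p.1.exists_eq_mk
  have hspan := hX.span_range_quadraticMap_eq veroneseMap fun p ↦ congrArg Subtype.val (hr p)
  calc ((n + 1).choose 2 : Cardinal)
      = Module.rank F (Sym2 (Fin n) → F) := by rw [rank_fun', Sym2.card, Fintype.card_fin]
    _ = Module.rank F (Submodule.span F (Set.range (veroneseMap ∘ r))) := by
      rw [← hspan, span_range_veroneseMap, rank_top]
    _ ≤ #(Set.range (veroneseMap ∘ r)) := rank_span_le _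
    _ ≤ #X := mk_range_le

/-- The point spanned by `e i + e j` for `i ≠ j`, respectively by `e i` for `i = j`, where `e` is
the standard basis; both are spanned by the indicator vector of the unordered pair. -/
def pairPoint (s : Sym2 (Fin n)) : PGPoint F n :=
  .mk (fun k ↦ if k ∈ s then 1 else 0) fun h ↦ by
    induction s with | _ i j
    simpa using congrFun h i

theorem threeGenerates_range_pairPoint {t : F} (ht₀ : t ≠ 0) (ht₁ : t ≠ 1) :
    ThreeGenerates (PGLines F n) (Set.range (pairPoint (F := F))) := by
  refine threeGenerates_iff.2 fun C hC hXC ↦ ?_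
  have indicator_mem (s : Sym2 (Fin n)) : (fun k ↦ if k ∈ s then (1 : F) else 0) ∈ C :=
    hXC _ ⟨s, rfl⟩ (PGPoint.mem_mk _)
  rw [← Set.univ_subset_iff, ← Submodule.top_coe (R := F), ← (Pi.basisFun F (Fin n)).span_eq]
  refine hC.span_subset ht₀ ht₁ ?_ ?_
  · rintro _ ⟨i, rfl⟩
    convert indicator_mem s(i, i) with k
    simp [Pi.single_apply]
  · rintro _ ⟨i, rfl⟩ _ ⟨j, rfl⟩ hij
    have hne : i ≠ j := by
      rintro rfl
      exact hij rfl
    convert indicator_mem s(i, j) with k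
    simp only [Pi.basisFun_apply, Pi.add_apply, Pi.single_apply, Sym2.mem_iff]
    grind

end GeneratingRank

/-- for a field `F` with more than two elements and `d ≥ 1`, the 3-generating
rank of the projective space `PG(d,F)` equals `(d+2 choose 2) = (d+1)(d+2)/2`. -/
theorem statement7 (F : Type*) [Field F] (hF : 2 < #F) (d : ℕ) (hd : 1 ≤ d) :
    grk3 (PGLines F (d + 1)) = ((d + 2).choose 2 : ℕ) := by
  obtain ⟨t, ht₀, ht₁⟩ : ∃ t : F, t ≠ 0 ∧ t ≠ 1 := by
    simpa using exists_notMem_of_length_lt [(0 : F), 1] (by simpa using hF)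
  refine le_antisymm ?_ (le_grk3 fun X hX ↦ hX.choose_le_mk)
  calc grk3 (PGLines F (d + 1))
      ≤ #(Set.range (pairPoint (F := F) (n := d + 1))) :=
        grk3_le_mk (threeGenerates_range_pairPoint ht₀ ht₁)
    _ ≤ ((d + 2).choose 2 : ℕ) := by
      simpa [Sym2.card] using mk_range_le_lift (f := pairPoint (F := F) (n := d + 1))
end

section
/- Let F be a field with more than 2 elements and d ≥ 1. Then the veronesean embedding ν_{d+1} of PG(d,F) in PG(F^{(d+2 choose 2)}) induced by the quadric veronesean map is relatively universal; that is, every morphism to ν_{d+1} from any veronesean embedding of PG(d,F) is injective. -/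
open Cardinal

universe u v

/-- The quadric veronesean map `ν_n : F^n → F^{(n+1 choose 2)}`, `x ↦ (x_i x_j)_{i ≤ j}`,
with coordinates indexed by unordered pairs from `Fin n`. -/
def nuVer (F : Type*) [Field F] (n : ℕ) (x : Fin n → F) : Sym2 (Fin n) → F :=
  Sym2.lift ⟨fun i j => x i * x j, fun _ _ => mul_comm _ _⟩

/-- The veronesean embedding of `PG(n-1,F)` induced by the quadric veronesean map:
`⟨x⟩ ↦ ⟨ν_n(x)⟩`. -/
def epsNu (F : Type*) [Field F] (n : ℕ) (p : PGPoint F n) : Submodule F (Sym2 (Fin n) → F) :=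
  Submodule.span F (nuVer F n '' (p.1 : Set (Fin n → F)))

/-!
A morphism `f` onto `ν` lifts `ν` to a map `e : Fⁿ → V'` with `f (e x) = ν (σ x)`. The span of the
image of a line has dimension at most `3`, and `ν` already spans `3` dimensions on a line, so `f` is
injective there. Hence `e` satisfies every identity of a quadratic map that involves only two
vectors: `e (a x) = a² e x`, and the polarization `e (x + y) - e x - e y` is homogeneous in each
argument. The third difference of `e` involves three vectors, but scaling them all by `a` multiplies
it by `a³` because it is a difference of polarizations, and by `a²` because it is a difference of
values of `e`. Choosing `a ≠ 0, 1` shows that it vanishes, so `e` is quadratic. Every quadratic map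
factors linearly through `ν`, which yields a surjective linear map onto `V'` whose composition with
`f` is bijective.
-/

open QuadraticMap Submodule

section LinearAlgebra

theorem injOn_of_linearIndependent_comp {K L V W ι : Type*} [DivisionRing K] [DivisionRing L]
    [AddCommGroup V] [Module K V] [AddCommGroup W] [Module L W] [Fintype ι] {σ : K →+* L}
    {f : V →ₛₗ[σ] W} {v : ι → V} (hv : LinearIndependent L (f ∘ v)) {S : Submodule K V}
    (hvS : ∀ i, v i ∈ S) (hS : Module.rank K S ≤ Fintype.card ι) : Set.InjOn f S := by
  have hcoeff (c : ι → K) (hc : f (∑ i, c i • v i) = 0) : c = 0 := by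
    simp only [map_sum, map_smulₛₗ] at hc
    exact funext fun i ↦ (map_eq_zero σ).1 (Fintype.linearIndependent_iff.1 hv _ hc i)
  have hli : LinearIndependent K v := Fintype.linearIndependent_iff.2 fun c hc i ↦
    congrFun (hcoeff c (by rw [hc, map_zero])) i
  have : Module.Finite K S := Module.rank_lt_aleph0_iff.1 (hS.trans_lt natCast_lt_aleph0)
  have hspan : span K (Set.range v) = S :=
    eq_of_le_of_finrank_le (span_le.2 (Set.range_subset_iff.2 hvS))
      (by rw [finrank_span_eq_card hli]; exact Module.finrank_le_of_rank_le hS)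
  rw [← LinearMap.disjoint_ker_iff_injOn, LinearMap.disjoint_ker, ← hspan]
  intro x hx hfx
  obtain ⟨c, rfl⟩ := (mem_span_range_iff_exists_fun K).1 hx
  simp [hcoeff c hfx]

theorem exists_le_finrank_eq {K V : Type*} [DivisionRing K] [AddCommGroup V] [Module K V]
    [Module.Finite K V] {p : Submodule K V} {k : ℕ} (hp : Module.finrank K p ≤ k)
    (hk : k ≤ Module.finrank K V) : ∃ q : Submodule K V, p ≤ q ∧ Module.finrank K q = k := by
  induction k, hp using Nat.le_induction with
  | base => exact ⟨p, le_rfl, rfl⟩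
  | succ m _ ih =>
    obtain ⟨q, hpq, hq⟩ := ih (by omega)
    obtain ⟨v, hv⟩ : ∃ v, v ∉ q := by
      by_contra! h
      rw [eq_top_iff'.2 h, finrank_top] at hq
      omega
    exact ⟨q ⊔ span K {v}, le_sup_of_le_left hpq, by rw [finrank_sup_span_singleton hv, hq]⟩

theorem exists_finrank_eq_two_mem_mem {K V : Type*} [DivisionRing K] [AddCommGroup V] [Module K V]
    [Module.Finite K V] (hV : 2 ≤ Module.finrank K V) (x y : V) :
    ∃ W : Submodule K V, Module.finrank K W = 2 ∧ x ∈ W ∧ y ∈ W := by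
  have hpair : Module.finrank K (span K {x, y}) ≤ 2 := by
    classical
    exact (finrank_span_le_card _).trans (by simpa using Finset.card_le_two)
  obtain ⟨W, hle, hW⟩ := exists_le_finrank_eq hpair hV
  exact ⟨W, hW, hle (subset_span (by simp)), hle (subset_span (by simp))⟩

/-- The coordinatewise action of a ring homomorphism, as a semilinear map. -/
def coordMap {R S : Type*} [Semiring R] [Semiring S] (σ : R →+* S) (ι : Type*) :
    (ι → R) →ₛₗ[σ] (ι → S) where
  toFun v i := σ (v i)
  map_add' v w := funext fun i ↦ map_add σ (v i) (w i)
  map_smul' a v := funext fun i ↦ map_mul σ a (v i)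

theorem coordMap_injective {R S : Type*} [Semiring R] [Semiring S] {σ : R →+* S}
    (hσ : Function.Injective σ) (ι : Type*) : Function.Injective (coordMap σ ι) :=
  hσ.comp_left

theorem coordMap_surjective {R S : Type*} [Semiring R] [Semiring S] {σ : R →+* S}
    (hσ : Function.Surjective σ) (ι : Type*) : Function.Surjective (coordMap σ ι) :=
  hσ.comp_left

end LinearAlgebra

section QuadraticOnPlanes

variable {R M N : Type*} [CommRing R] [AddCommGroup M] [AddCommGroup N]

theorem polar_polar_left_comm (q : M → N) (x y z : M) :
    polar (polar q x) y z = polar (polar q y) x z := by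
  simp only [polar, add_left_comm x y z, add_comm x y]
  abel

variable [Module R M] [Module R N]

theorem polar_add_left_of_homogeneous {q : M → N} {a : R} (ha : IsSMulRegular N a)
    (ha₁ : IsSMulRegular N (a - 1)) (hq : ∀ x, q (a • x) = (a * a) • q x)
    (hpolar : ∀ x y, polar q (a • x) y = a • polar q x y) (x x' y : M) :
    polar q (x + x') y = polar q x y + polar q x' y := by
  have hquadratic : polar (polar q (a • y)) (a • x) (a • x') =
      (a * a) • polar (polar q y) x x' := by
    simp only [polar, ← smul_add, hq, smul_sub]
  have hcubic : polar (polar q (a • y)) (a • x) (a • x') =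
      a • (a * a) • polar (polar q y) x x' := by
    have hfirst (u v w : M) : polar (polar q (a • u)) v w = a • polar (polar q u) v w := by
      rw [show polar q (a • u) = a • polar q u from funext (hpolar u), polar_smul]
    have hsecond (u v w : M) : polar (polar q u) (a • v) w = a • polar (polar q u) v w := by
      rw [polar_polar_left_comm, hfirst, polar_polar_left_comm]
    have hthird (u v w : M) : polar (polar q u) v (a • w) = a • polar (polar q u) v w := by
      rw [polar_comm (polar q u), hsecond, polar_comm (polar q u)]
    rw [hfirst, hsecond, hthird, mul_smul]
  have hzero : polar (polar q y) x x' = 0 := by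
    refine ha <| ha <| ha₁ ?_
    simpa [sub_smul, mul_smul, sub_eq_zero] using hcubic.symm.trans hquadratic
  rw [polar, sub_sub, sub_eq_zero] at hzero
  simpa only [polar_comm q _ y] using hzero

variable {S N₀ N' : Type*} [Semiring S] [AddCommGroup N₀] [Module R N₀] [AddCommGroup N']
  [Module S N'] {σ : R →+* S}

theorem exists_quadraticMap_eq_of_injOn_planes {a : R} (ha : IsSMulRegular N a)
    (ha₁ : IsSMulRegular N (a - 1)) {f : N →ₛₗ[σ] N'} {g : N₀ →ₛₗ[σ] N'}
    (Q : QuadraticMap R M N₀) {e : M → N} (he : ∀ x, f (e x) = g (Q x))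
    (hplane : ∀ x y, Set.InjOn f (span R (e '' span R ({x, y} : Set M)))) :
    ∃ q : QuadraticMap R M N, ⇑q = e := by
  have hmem {x y z : M} (hz : z ∈ span R {x, y}) : e z ∈ span R (e '' span R ({x, y} : Set M)) :=
    subset_span ⟨z, hz, rfl⟩
  have hx (x y : M) : x ∈ span R {x, y} := subset_span (by simp)
  have hy (x y : M) : y ∈ span R {x, y} := subset_span (by simp)
  have hsmul (b : R) (x : M) : e (b • x) = (b * b) • e x := by
    refine hplane x x (hmem (smul_mem _ b (hx x x))) (smul_mem _ _ (hmem (hx x x))) ?_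
    simp only [map_smulₛₗ, he, QuadraticMap.map_smul]
  have hpolar_mem {x y u v : M} (hu : u ∈ span R {x, y}) (hv : v ∈ span R {x, y}) :
      polar e u v ∈ span R (e '' span R ({x, y} : Set M)) :=
    sub_mem (sub_mem (hmem (add_mem hu hv)) (hmem hu)) (hmem hv)
  have hfpolar (x y : M) : f (polar e x y) = g (polar Q x y) := by
    simp only [polar, map_sub, he]
  have hpolar (b : R) (x y : M) : polar e (b • x) y = b • polar e x y := by
    refine hplane x y (hpolar_mem (smul_mem _ b (hx x y)) (hy x y))
      (smul_mem _ _ (hpolar_mem (hx x y) (hy x y))) ?_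
    simp only [map_smulₛₗ, hfpolar, QuadraticMap.polar_smul_left]
  exact ⟨.ofPolar e hsmul (polar_add_left_of_homogeneous ha ha₁ (hsmul a) (hpolar a)) hpolar, rfl⟩

end QuadraticOnPlanes

section Veronesean

variable {F : Type*} [Field F] {n : ℕ}

theorem nuVer_mk (x : Fin n → F) (i j : Fin n) : nuVer F n x s(i, j) = x i * x j := rfl

theorem nuVer_smul (a : F) (x : Fin n → F) : nuVer F n (a • x) = (a * a) • nuVer F n x := by
  ext ⟨i, j⟩
  simp only [nuVer_mk, Pi.smul_apply, smul_eq_mul]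
  ring

theorem polar_nuVer_mk (x y : Fin n → F) (i j : Fin n) :
    polar (nuVer F n) x y s(i, j) = x i * y j + y i * x j := by
  simp only [polar, nuVer_mk, Pi.sub_apply, Pi.add_apply]
  ring

/-- The quadric veronesean map as a `QuadraticMap`. -/
def nuVerQuadraticMap (F : Type*) [Field F] (n : ℕ) :
    QuadraticMap F (Fin n → F) (Sym2 (Fin n) → F) :=
  .ofPolar (nuVer F n) nuVer_smul
    (fun x x' y ↦ by ext ⟨i, j⟩; simp only [polar_nuVer_mk, Pi.add_apply]; ring)
    (fun a x y ↦ by ext ⟨i, j⟩; simp only [polar_nuVer_mk, Pi.smul_apply, smul_eq_mul]; ring)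

theorem nuVer_zero : nuVer F n 0 = 0 := QuadraticMap.map_zero (nuVerQuadraticMap F n)

theorem span_range_nuVer : span F (Set.range (nuVer F n)) = ⊤ := by
  have hmem (x : Fin n → F) : nuVer F n x ∈ span F (Set.range (nuVer F n)) := subset_span ⟨x, rfl⟩
  rw [eq_top_iff, ← (Pi.basisFun F (Sym2 (Fin n))).span_eq, span_le]
  rintro _ ⟨⟨i, j⟩, rfl⟩
  change Pi.basisFun F _ s(i, j) ∈ _
  rw [Pi.basisFun_apply]
  obtain rfl | hij := eq_or_ne i j
  · convert! hmem (Pi.single i 1) using 1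
    ext ⟨k, l⟩
    simp only [nuVer_mk, Pi.single_apply, Sym2.eq_iff]
    grind
  · convert! sub_mem (sub_mem (hmem (Pi.single i 1 + Pi.single j 1)) (hmem (Pi.single i 1)))
      (hmem (Pi.single j 1)) using 1
    ext ⟨k, l⟩
    change _ = polar (nuVer F n) _ _ s(k, l)
    simp only [polar_nuVer_mk, Pi.single_apply, Sym2.eq_iff]
    grind

theorem exists_linearMap_apply_nuVer {N : Type*} [AddCommGroup N] [Module F N]
    (q : QuadraticMap F (Fin n → F) N) :
    ∃ L : (Sym2 (Fin n) → F) →ₗ[F] N, ∀ x, L (nuVer F n x) = q x := by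
  let E := Pi.basisFun F (Fin n)
  let B := q.toBilin E
  refine ⟨∑ i, ∑ j, (LinearMap.proj s(i, j)).smulRight (B (E i) (E j)), fun x ↦ ?_⟩
  have hB : B x x = q x := DFunLike.congr_fun (q.toQuadraticMap_toBilin E) x
  rw [← hB, ← LinearMap.sum_repr_mul_repr_mul E E]
  simp [E, Finsupp.sum_fintype, nuVer_mk, mul_smul]

theorem linearIndependent_nuVer {x y : Fin n → F} (hxy : LinearIndependent F ![x, y]) :
    LinearIndependent F ![nuVer F n x, nuVer F n y, nuVer F n (x + y)] := by
  rw [LinearIndependent.pair_iff] at hxy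
  rw [Fintype.linearIndependent_iff]
  intro c hc
  simp only [Fin.sum_univ_three, Matrix.cons_val] at hc
  have hrow (i : Fin n) :
      (c 0 + c 2) * x i + c 2 * y i = 0 ∧ c 2 * x i + (c 1 + c 2) * y i = 0 := by
    refine hxy _ _ (funext fun j ↦ ?_)
    have := congrFun hc s(i, j)
    simp only [Pi.add_apply, Pi.smul_apply, nuVer_mk, smul_eq_mul, Pi.zero_apply] at this ⊢
    linear_combination this
  obtain ⟨h02, h2⟩ := hxy _ _ (funext fun i ↦ (hrow i).1)
  obtain ⟨-, h12⟩ := hxy _ _ (funext fun i ↦ (hrow i).2)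
  simp only [h2, add_zero] at h02 h12
  intro i
  fin_cases i <;> assumption

theorem coordMap_nuVer {K : Type*} [Field K] (σ : F →+* K) (x : Fin n → F) :
    coordMap σ _ (nuVer F n x) = nuVer K n (coordMap σ _ x) := by
  ext ⟨i, j⟩
  exact map_mul σ (x i) (x j)

theorem injective_of_comp_eq_comp_nuVer (hF : 2 < #F) {K N N' : Type*} [Semiring K]
    [AddCommGroup N] [Module F N] [AddCommGroup N'] [Module K N'] {σ : F →+* K}
    {f : N →ₛₗ[σ] N'} {g : (Sym2 (Fin n) → F) →ₛₗ[σ] N'} (hg : Function.Injective g)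
    {e : (Fin n → F) → N} (he : ∀ x, f (e x) = g (nuVer F n x))
    (hplane : ∀ x y, Set.InjOn f (span F (e '' span F ({x, y} : Set (Fin n → F)))))
    (hspan : span F (Set.range e) = ⊤) : Function.Injective f := by
  obtain ⟨a, ha₀, ha₁⟩ := exists_ne_ne_of_three_le (α := F)
    (by exact_mod_cast natCast_add_one_le_iff.2 hF) 0 1
  obtain ⟨q, rfl⟩ := exists_quadraticMap_eq_of_injOn_planes (.of_ne_zero ha₀)
    (.of_ne_zero (sub_ne_zero.2 ha₁)) (nuVerQuadraticMap F n) he hplane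
  obtain ⟨L, hL⟩ := exists_linearMap_apply_nuVer q
  have hfL : f.comp L = g := LinearMap.ext_on_range span_range_nuVer fun x ↦ by
    rw [LinearMap.comp_apply, hL, he]
  have hL_surj : Function.Surjective L := by
    rw [← LinearMap.range_eq_top, eq_top_iff, ← hspan, span_le]
    rintro _ ⟨x, rfl⟩
    exact ⟨_, hL x⟩
  refine Function.Injective.of_comp_right (g := L) ?_ hL_surj
  rwa [← LinearMap.coe_comp, hfL]

end Veronesean

section Projective

variable {F : Type*} [Field F] {n : ℕ}

theorem epsNu_eq_span_singleton {p : PGPoint F n} {x : Fin n → F} (hx : x ∈ p.1) (hx₀ : x ≠ 0) :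
    epsNu F n p = span F {nuVer F n x} := by
  refine le_antisymm (span_le.2 ?_) (span_le.2 ?_)
  · rintro _ ⟨y, hy, rfl⟩
    rw [eq_span_singleton_of_mem_of_finrank_eq_one p.2 hx hx₀] at hy
    obtain ⟨a, rfl⟩ := mem_span_singleton.1 hy
    rw [nuVer_smul]
    exact smul_mem _ _ (mem_span_singleton_self _)
  · exact Set.singleton_subset_iff.2 (subset_span ⟨x, hx, rfl⟩)

variable {V : Type*} [AddCommGroup V] [Module F V]

/-- The subspace `⟨ε(W)⟩` spanned by the images of the points on the subspace `W`. -/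
def spanOn (ε : PGPoint F n → Submodule F V) (W : Submodule F (Fin n → F)) : Submodule F V :=
  ⨆ p ∈ {p : PGPoint F n | p.1 ≤ W}, ε p

theorem le_spanOn (ε : PGPoint F n → Submodule F V) {p : PGPoint F n}
    {W : Submodule F (Fin n → F)} (hp : p.1 ≤ W) : ε p ≤ spanOn ε W :=
  le_biSup ε (show p ∈ {p : PGPoint F n | p.1 ≤ W} from hp)

variable {σ : F →+* F} {ε : PGPoint F n → Submodule F V}
  {f : V →ₛₗ[σ] (Sym2 (Fin n) → F)}

theorem injOn_spanOn {e : (Fin n → F) → V} (hfe : ∀ x, f (e x) = nuVer F n x)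
    (he : ∀ W, ∀ x ∈ W, e x ∈ spanOn ε W) {W : Submodule F (Fin n → F)}
    (hW : Module.finrank F W = 2) (hrank : Module.rank F (spanOn ε W) ≤ 3) :
    Set.InjOn f (spanOn ε W) := by
  have : Module.Finite F W := Module.finite_of_finrank_pos (by omega)
  let b := Module.finBasisOfFinrankEq F W hW
  have hb : LinearIndependent F ![(b 0 : Fin n → F), b 1] := by
    convert! b.linearIndependent.map' W.subtype W.ker_subtype using 1
    ext i : 1
    fin_cases i <;> rfl
  refine injOn_of_linearIndependent_comp (v := ![e (b 0), e (b 1), e (b 0 + b 1)]) ?_ ?_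
    (by simpa using hrank)
  · convert! linearIndependent_nuVer hb using 1
    ext i : 1
    fin_cases i <;> exact hfe _
  · intro i
    fin_cases i
    exacts [he W _ (b 0).2, he W _ (b 1).2, he W _ (add_mem (b 0).2 (b 1).2)]

variable [RingHomSurjective σ]

theorem exists_lift_nuVer (hf : ∀ p, (ε p).map f = epsNu F n p) :
    ∃ e : (Fin n → F) → V, (∀ x, f (e x) = nuVer F n x) ∧ ∀ W, ∀ x ∈ W, e x ∈ spanOn ε W := by
  have hlift (x : Fin n → F) : ∃ v, f v = nuVer F n x ∧ ∀ W, x ∈ W → v ∈ spanOn ε W := by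
    obtain rfl | hx := eq_or_ne x 0
    · exact ⟨0, by rw [map_zero, nuVer_zero], fun W _ ↦ zero_mem _⟩
    · let p : PGPoint F n := ⟨span F {x}, finrank_span_singleton hx⟩
      obtain ⟨v, hv, hfv⟩ : nuVer F n x ∈ (ε p).map f := by
        rw [hf]
        exact subset_span ⟨x, mem_span_singleton_self x, rfl⟩
      exact ⟨v, hfv, fun W hxW ↦ le_spanOn ε ((span_singleton_le_iff_mem _ _).2 hxW) hv⟩
  choose e hfe he using hlift
  exact ⟨e, hfe, fun W x ↦ he x W⟩

theorem span_range_lift_eq_top (hspan : ⨆ p, ε p = ⊤) (hf : ∀ p, (ε p).map f = epsNu F n p)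
    {e : (Fin n → F) → V} (hfe : ∀ x, f (e x) = nuVer F n x)
    (he : ∀ W, ∀ x ∈ W, e x ∈ spanOn ε W)
    (hinj : ∀ p : PGPoint F n, ∃ W, p.1 ≤ W ∧ Set.InjOn f (spanOn ε W)) :
    span F (Set.range e) = ⊤ := by
  rw [eq_top_iff, ← hspan]
  refine iSup_le fun p v hv ↦ ?_
  obtain ⟨W, hpW, hW⟩ := hinj p
  obtain ⟨x, hx, hx₀⟩ := p.1.exists_mem_ne_zero_of_ne_bot (one_le_finrank_iff.1 p.2.ge)
  have hfv : f v ∈ span F {nuVer F n x} := by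
    rw [← epsNu_eq_span_singleton hx hx₀, ← hf]
    exact mem_map_of_mem hv
  obtain ⟨c, hc⟩ := mem_span_singleton.1 hfv
  obtain ⟨c, rfl⟩ := σ.surjective c
  obtain rfl : c • e x = v := hW (smul_mem _ c (he W x (hpW hx))) (le_spanOn ε hpW hv) (by
    rw [map_smulₛₗ, hfe, hc])
  exact smul_mem _ c (subset_span ⟨x, rfl⟩)

end Projective

theorem IsConic.rank_sSup_le {F : Type*} [Field F] {V : Type*} [AddCommGroup V] [Module F V]
    {C : Set (Submodule F V)} (hC : IsConic F C) : Module.rank F ↥(sSup C) ≤ 3 := by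
  obtain ⟨φ, -, rfl⟩ := hC
  have hle : sSup {p | ∃ s t : F, ¬(s = 0 ∧ t = 0) ∧ p = span F {φ ![s ^ 2, s * t, t ^ 2]}} ≤
      LinearMap.range φ := sSup_le <| by
    rintro _ ⟨s, t, -, rfl⟩
    exact (span_singleton_le_iff_mem _ _).2 ⟨_, rfl⟩
  have hfin : Module.finrank F (LinearMap.range φ) ≤ 3 := by simpa using φ.finrank_range_le
  refine (rank_mono hle).trans ?_
  rw [← Module.finrank_eq_rank]
  exact_mod_cast hfin

theorem statement8_general {F V : Type*} [Field F] (hF : 2 < #F) {n : ℕ} (hn : 2 ≤ n)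
    [AddCommGroup V] [Module F V] {ε : PGPoint F n → Submodule F V} (hspan : ⨆ p, ε p = ⊤)
    (hrank : ∀ l ∈ PGLines F n, Module.rank F ↥(⨆ p ∈ l, ε p) ≤ 3)
    {σ : F →+* F} [RingHomSurjective σ] {f : V →ₛₗ[σ] (Sym2 (Fin n) → F)}
    (hf : ∀ p, (ε p).map f = epsNu F n p) : Function.Injective f := by
  obtain ⟨e, hfe, he⟩ := exists_lift_nuVer hf
  have hinj {W : Submodule F (Fin n → F)} (hW : Module.finrank F W = 2) :
      Set.InjOn f (spanOn ε W) := injOn_spanOn hfe he hW (hrank _ ⟨W, hW, rfl⟩)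
  -- Only after reparametrizing by `σ` do the lift and `ν` have the same scaling factors.
  refine injective_of_comp_eq_comp_nuVer hF (coordMap_injective σ.injective _)
    (e := e ∘ coordMap σ _) (fun x ↦ ?_) (fun x y ↦ ?_) ?_
  · rw [Function.comp_apply, hfe, coordMap_nuVer]
  · obtain ⟨W, hW, hx, hy⟩ := exists_finrank_eq_two_mem_mem (K := F) (by simpa using hn)
      (coordMap σ _ x) (coordMap σ _ y)
    refine (hinj hW).mono (span_le.2 ?_)
    rintro _ ⟨z, hz, rfl⟩
    exact he W _ ((span_le (p := W.comap (coordMap σ _))).2 (Set.pair_subset hx hy) hz)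
  · rw [(coordMap_surjective σ.surjective _).range_comp]
    refine span_range_lift_eq_top hspan hf hfe he fun p ↦ ?_
    obtain ⟨W, hpW, hW⟩ := exists_le_finrank_eq (p.2.trans_le one_le_two) (by simpa using hn)
    exact ⟨W, hpW, hinj hW⟩

/-- Let `F` be a field with more than 2 elements and `d ≥ 1`.  The veronesean
embedding `ν_{d+1}` of `PG(d,F)` in `PG(F^{(d+2 choose 2)})` induced by the quadric
veronesean map is relatively universal: every morphism to it from any veronesean embedding
of `PG(d,F)` is injective. -/
theorem statement8 (F : Type) [Field F] (hF : 2 < #F) (d : ℕ) (hd : 1 ≤ d) :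
    RelUniversal.{u} F (PGPoint F (d + 1)) (PGLines F (d + 1))
      (Sym2 (Fin (d + 1)) → F) (epsNu F (d + 1)) := by
  intro V' _ _ ε' σ hσ f _ hf
  have : RingHomSurjective σ := ⟨hσ.2⟩
  refine statement8_general hF (by omega) ε'.spans (fun l hl ↦ ?_)
    fun p ↦ SetLike.coe_injective (by rw [map_coe, hf])
  rw [← sSup_image]
  exact (ε'.conic l hl).rank_sSup_le
end

section
/- Let q be an odd prime power and F = F_q, and suppose −1 is a non-square in F. Then there exists g ∈ SL(2,F) with g({a_∞, a_0}) = {a_∞, a_0} and g(A^□) = A^◇. Consequently, SL(2,F) is transitive on the set of pairs ({a, a'}, a'') where a, a', a'' are pairwise distinct points of PG(1,F); that is, for any two triples (a,a',a'') and (b,b',b'') of pairwise distinct points of PG(1,F) there is g ∈ SL(2,F) with g({a,a'}) = {b,b'} and g(a'') = b''. -/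
/-!
Any triple of distinct points of `PG(1,F)` has the form `⟨u⟩, ⟨v⟩, ⟨u + v⟩` with `u, v` a basis of
`F²`, so the matrix with columns `u, v` carries `a_∞, a_0, a_1` to it. Dividing a matrix by a
square root of its determinant puts it in `SL(2,F)` without changing its action on points, and
exchanging `u` and `v` negates the determinant. Hence `a_∞, a_0, a_1` can be moved to any triple,
up to order in the first two places, as soon as `d` or `-d` is a square for every `d` in `F`; over
a finite field this holds when `-1` is a non-square, since a product of two non-squares is a square.
The map `λ ↦ -λ⁻¹` then preserves `{a_∞, a_0}` and exchanges `A^□` and `A^◇`.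
-/

/-- `SL(2,F)`. -/
abbrev SL2 (F : Type*) [Field F] := Matrix.SpecialLinearGroup (Fin 2) F

/-- The action of `g ∈ SL(2,F)` on subspaces of `F²`, through its linear action on `F²`. -/
def pgact (F : Type*) [Field F] (g : SL2 F) (W : Submodule F (Fin 2 → F)) :
    Submodule F (Fin 2 → F) :=
  Submodule.map (Matrix.toLin' (g : Matrix (Fin 2) (Fin 2) F)) W

/-- The point `⟨x⟩` of `PG(1,F)`. -/
def ptv (F : Type*) [Field F] (x : Fin 2 → F) : Submodule F (Fin 2 → F) :=
  Submodule.span F {x}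

/-- The point `a_∞ = ⟨(1,0)⟩` of `PG(1,F)`. -/
def aInfty (F : Type*) [Field F] : Submodule F (Fin 2 → F) := ptv F ![1, 0]

/-- The point `a_λ = ⟨(λ,1)⟩` of `PG(1,F)`. -/
def aPt (F : Type*) [Field F] (l : F) : Submodule F (Fin 2 → F) := ptv F ![l, 1]

/-- `A^□ = {a_λ : λ a nonzero square}`. -/
def ASq (F : Type*) [Field F] : Set (Submodule F (Fin 2 → F)) :=
  {W | ∃ l : F, l ≠ 0 ∧ IsSquare l ∧ W = aPt F l}

/-- `A^◇ = {a_λ : λ a non-square}`. -/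
def ANSq (F : Type*) [Field F] : Set (Submodule F (Fin 2 → F)) :=
  {W | ∃ l : F, ¬ IsSquare l ∧ W = aPt F l}

open Module Matrix
open scoped LinearAlgebra.Projectivization

section Lines

variable {K V : Type*} [DivisionRing K] [AddCommGroup V] [Module K V]

theorem exists_ne_zero_span_singleton_eq {a : Submodule K V} (ha : finrank K a = 1) :
    ∃ u : V, u ≠ 0 ∧ Submodule.span K {u} = a :=
  let p : ℙ K V := .mk'' a ha
  ⟨p.rep, p.rep_nonzero, by rw [← p.submodule_eq, Projectivization.submodule_mk'']⟩

theorem linearIndependent_pair_of_span_singleton_ne {u v : V} (hu : u ≠ 0) (hv : v ≠ 0)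
    (huv : Submodule.span K {u} ≠ Submodule.span K {v}) : LinearIndependent K ![u, v] := by
  refine (LinearIndependent.pair_iff' hu).2 ?_
  rintro c rfl
  have hc : c ≠ 0 := left_ne_zero_of_smul hv
  exact huv (Submodule.span_singleton_smul_eq hc.isUnit u).symm

theorem exists_linearIndependent_pair_span_add_eq (hV : finrank K V = 2) {a b c : Submodule K V}
    (ha : finrank K a = 1) (hb : finrank K b = 1) (hc : finrank K c = 1)
    (hab : a ≠ b) (hac : a ≠ c) (hbc : b ≠ c) :
    ∃ u v : V, LinearIndependent K ![u, v] ∧ Submodule.span K {u} = a ∧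
      Submodule.span K {v} = b ∧ Submodule.span K {u + v} = c := by
  obtain ⟨u, hu, rfl⟩ := exists_ne_zero_span_singleton_eq ha
  obtain ⟨v, hv, rfl⟩ := exists_ne_zero_span_singleton_eq hb
  obtain ⟨w, hw, rfl⟩ := exists_ne_zero_span_singleton_eq hc
  have huv := linearIndependent_pair_of_span_singleton_ne hu hv hab
  have huw := linearIndependent_pair_of_span_singleton_ne hu hw hac
  have hvw := linearIndependent_pair_of_span_singleton_ne hv hw hbc
  obtain ⟨r, s, rfl⟩ : ∃ r s : K, r • u + s • v = w := by
    have hspan := huv.span_eq_top_of_card_eq_finrank (by simp [hV])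
    rw [range_cons_cons_empty] at hspan
    exact Submodule.mem_span_pair.1 (hspan ▸ Submodule.mem_top)
  have hr : r ≠ 0 := by
    rintro rfl
    exact (LinearIndependent.pair_iff' hv).1 hvw s (by simp)
  have hs : s ≠ 0 := by
    rintro rfl
    exact (LinearIndependent.pair_iff' hu).1 huw r (by simp)
  have hru := Submodule.span_singleton_smul_eq hr.isUnit u
  have hsv := Submodule.span_singleton_smul_eq hs.isUnit v
  exact ⟨r • u, s • v, linearIndependent_pair_of_span_singleton_ne (smul_ne_zero hr hu)
    (smul_ne_zero hs hv) (by rwa [hru, hsv]), hru, hsv, rfl⟩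

end Lines

section Action

variable {F : Type*} [Field F]

theorem ptv_smul {c : F} (hc : c ≠ 0) (x : Fin 2 → F) : ptv F (c • x) = ptv F x :=
  Submodule.span_singleton_smul_eq hc.isUnit x

theorem pgact_mul (g h : SL2 F) (W : Submodule F (Fin 2 → F)) :
    pgact F (g * h) W = pgact F g (pgact F h W) := by
  simp only [pgact, Matrix.SpecialLinearGroup.coe_mul, toLin'_mul, Submodule.map_comp]

theorem exists_pgact_eq_map_toLin' {M : Matrix (Fin 2) (Fin 2) F} (hM : M.det ≠ 0)
    (hsq : IsSquare M.det) : ∃ g : SL2 F, ∀ W, pgact F g W = W.map M.toLin' := by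
  obtain ⟨s, hs⟩ := hsq
  have hs0 : s ≠ 0 := by
    rintro rfl
    exact hM (by simpa using hs)
  have hdet : (s⁻¹ • M).det = 1 := by
    rw [det_smul, Fintype.card_fin, hs]
    field_simp
  refine ⟨⟨s⁻¹ • M, hdet⟩, fun W => ?_⟩
  simp only [pgact, map_smul]
  exact Submodule.map_smul _ _ _ (inv_ne_zero hs0)

theorem exists_pgact_standard_eq_span {u v : Fin 2 → F} (huv : LinearIndependent F ![u, v])
    (hsq : IsSquare (of ![u, v]).det) :
    ∃ g : SL2 F, pgact F g (aInfty F) = Submodule.span F {u} ∧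
      pgact F g (aPt F 0) = Submodule.span F {v} ∧
      pgact F g (aPt F 1) = Submodule.span F {u + v} := by
  have hdet : (of ![u, v]).det ≠ 0 :=
    ((isUnit_iff_isUnit_det _).1 (linearIndependent_rows_iff_isUnit.1 huv)).ne_zero
  rw [← det_transpose] at hdet hsq
  obtain ⟨g, hg⟩ := exists_pgact_eq_map_toLin' hdet hsq
  refine ⟨g, ?_, ?_, ?_⟩ <;> rw [hg] <;>
    simp [aInfty, aPt, ptv, Submodule.map_span, mulVec_transpose]

theorem exists_pgact_standard_eq (hsq : ∀ d : F, IsSquare d ∨ IsSquare (-d))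
    {a a' a'' : Submodule F (Fin 2 → F)} (ha : finrank F a = 1) (ha' : finrank F a' = 1)
    (ha'' : finrank F a'' = 1) (haa' : a ≠ a') (haa'' : a ≠ a'') (ha'a'' : a' ≠ a'') :
    ∃ g : SL2 F, pgact F g '' {aInfty F, aPt F 0} = {a, a'} ∧ pgact F g (aPt F 1) = a'' := by
  obtain ⟨u, v, huv, rfl, rfl, rfl⟩ := exists_linearIndependent_pair_span_add_eq
    (finrank_fin_fun F) ha ha' ha'' haa' haa'' ha'a''
  have hswap : (of ![v, u]).det = -(of ![u, v]).det := by
    simp only [det_fin_two, of_apply, cons_val_zero, cons_val_one]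
    ring
  rcases hsq (of ![u, v]).det with h | h
  · obtain ⟨g, hu, hv, huv'⟩ := exists_pgact_standard_eq_span huv h
    exact ⟨g, by rw [Set.image_pair, hu, hv], huv'⟩
  · rw [← hswap] at h
    have hli : LinearIndependent F ![v, u] := LinearIndependent.pair_symm_iff.1 huv
    obtain ⟨g, hv, hu, hvu⟩ := exists_pgact_standard_eq_span hli h
    exact ⟨g, by rw [Set.image_pair, hv, hu, Set.pair_comm], by rw [hvu, add_comm]⟩

theorem exists_pgact_image_pair_eq (hsq : ∀ d : F, IsSquare d ∨ IsSquare (-d))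
    {a a' a'' b b' b'' : Submodule F (Fin 2 → F)}
    (ha : finrank F a = 1) (ha' : finrank F a' = 1) (ha'' : finrank F a'' = 1)
    (hb : finrank F b = 1) (hb' : finrank F b' = 1) (hb'' : finrank F b'' = 1)
    (haa' : a ≠ a') (haa'' : a ≠ a'') (ha'a'' : a' ≠ a'')
    (hbb' : b ≠ b') (hbb'' : b ≠ b'') (hb'b'' : b' ≠ b'') :
    ∃ g : SL2 F, pgact F g '' {a, a'} = {b, b'} ∧ pgact F g a'' = b'' := by
  obtain ⟨g, hg, rfl⟩ := exists_pgact_standard_eq hsq ha ha' ha'' haa' haa'' ha'a''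
  obtain ⟨k, hk, rfl⟩ := exists_pgact_standard_eq hsq hb hb' hb'' hbb' hbb'' hb'b''
  have hkg (W) : pgact F (k * g⁻¹) (pgact F g W) = pgact F k W := by
    rw [← pgact_mul, inv_mul_cancel_right]
  refine ⟨k * g⁻¹, ?_, hkg _⟩
  simp only [← hg, ← hk, Set.image_image, hkg]

end Action

section NegInv

variable {F : Type*} [Field F]

variable (F) in
/-- The element of `SL(2,F)` inducing the Möbius transformation `λ ↦ -λ⁻¹` on `PG(1,F)`; it
realizes the exchange of `A^□` and `A^◇`. -/
def negInv : SL2 F := ⟨!![0, -1; 1, 0], by simp [det_fin_two_of]⟩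

theorem pgact_negInv_ptv (x y : F) : pgact F (negInv F) (ptv F ![x, y]) = ptv F ![-y, x] := by
  simp [pgact, ptv, Submodule.map_span, negInv, -mulVec_cons]

theorem pgact_negInv_aInfty : pgact F (negInv F) (aInfty F) = aPt F 0 := by
  rw [aInfty, pgact_negInv_ptv, neg_zero, aPt]

theorem pgact_negInv_aPt_zero : pgact F (negInv F) (aPt F 0) = aInfty F := by
  rw [aPt, pgact_negInv_ptv, aInfty, ← ptv_smul (neg_ne_zero.2 one_ne_zero) ![1, 0]]
  simp

theorem pgact_negInv_aPt {l : F} (hl : l ≠ 0) :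
    pgact F (negInv F) (aPt F l) = aPt F (-l⁻¹) := by
  rw [aPt, pgact_negInv_ptv, aPt, ← ptv_smul hl ![-l⁻¹, 1]]
  simp [hl]

theorem isSquare_neg_iff_not_isSquare (hns : ¬ IsSquare (-1 : F)) {l : F} (hl : l ≠ 0)
    (hsq : IsSquare l ∨ IsSquare (-l)) : IsSquare (-l) ↔ ¬ IsSquare l := by
  refine ⟨fun hneg hpos => hns ?_, hsq.resolve_left⟩
  simpa only [neg_div, div_self hl] using hneg.div hpos

theorem pgact_negInv_image_ASq (hns : ¬ IsSquare (-1 : F))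
    (hsq : ∀ d : F, IsSquare d ∨ IsSquare (-d)) : pgact F (negInv F) '' ASq F = ANSq F := by
  have hneg {l : F} (hl : l ≠ 0) := isSquare_neg_iff_not_isSquare hns hl (hsq l)
  ext W
  constructor
  · rintro ⟨_, ⟨l, hl, hlsq, rfl⟩, rfl⟩
    refine ⟨-l⁻¹, ?_, pgact_negInv_aPt hl⟩
    rwa [hneg (inv_ne_zero hl), isSquare_inv, not_not]
  · rintro ⟨l, hlns, rfl⟩
    have hl : l ≠ 0 := fun h => hlns (h ▸ IsSquare.zero)
    have hl' : -l⁻¹ ≠ 0 := neg_ne_zero.2 (inv_ne_zero hl)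
    refine ⟨aPt F (-l⁻¹), ⟨-l⁻¹, hl', ?_, rfl⟩, ?_⟩
    · rwa [hneg (inv_ne_zero hl), isSquare_inv]
    · rw [pgact_negInv_aPt hl', inv_neg, inv_inv, neg_neg]

end NegInv

section FiniteField

variable {F : Type*} [Field F] [Finite F]

theorem isSquare_mul_of_not_isSquare {a b : F} (ha : ¬ IsSquare a) (hb : ¬ IsSquare b) :
    IsSquare (a * b) := by
  classical
  have := Fintype.ofFinite F
  have ha0 : a ≠ 0 := fun h => ha (h ▸ IsSquare.zero)
  have hb0 : b ≠ 0 := fun h => hb (h ▸ IsSquare.zero)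
  rw [← quadraticChar_one_iff_isSquare (mul_ne_zero ha0 hb0), map_mul,
    quadraticChar_neg_one_iff_not_isSquare.2 ha, quadraticChar_neg_one_iff_not_isSquare.2 hb,
    neg_one_mul, neg_neg]

theorem isSquare_or_isSquare_neg (hns : ¬ IsSquare (-1 : F)) (d : F) :
    IsSquare d ∨ IsSquare (-d) := by
  refine or_iff_not_imp_left.2 fun hd => ?_
  simpa only [neg_one_mul] using isSquare_mul_of_not_isSquare hns hd

end FiniteField

theorem statement11_general (F : Type*) [Field F] (hns : ¬ IsSquare (-1 : F))
    (hsq : ∀ d : F, IsSquare d ∨ IsSquare (-d)) :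
    (∃ g : SL2 F, pgact F g '' {aInfty F, aPt F 0} = {aInfty F, aPt F 0} ∧
        pgact F g '' ASq F = ANSq F) ∧
    (∀ a a' a'' b b' b'' : Submodule F (Fin 2 → F),
      finrank F a = 1 → finrank F a' = 1 → finrank F a'' = 1 →
      finrank F b = 1 → finrank F b' = 1 → finrank F b'' = 1 →
      a ≠ a' → a ≠ a'' → a' ≠ a'' → b ≠ b' → b ≠ b'' → b' ≠ b'' →
      ∃ g : SL2 F, pgact F g '' {a, a'} = {b, b'} ∧ pgact F g a'' = b'') := by
  refine ⟨⟨negInv F, ?_, pgact_negInv_image_ASq hns hsq⟩,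
    fun _ _ _ _ _ _ => exists_pgact_image_pair_eq hsq⟩
  rw [Set.image_pair, pgact_negInv_aInfty, pgact_negInv_aPt_zero, Set.pair_comm]

/-- Let `q` be an odd prime power, `F = F_q` (formalized: `F` a finite field
of odd cardinality), and suppose `−1` is a non-square in `F`.  Then some `g ∈ SL(2,F)`
stabilizes `{a_∞, a_0}` and maps `A^□` onto `A^◇`.  Consequently `SL(2,F)` is transitive on
pairs `({a,a'}, a'')` of pairwise distinct points of `PG(1,F)`. -/
theorem statement11 (F : Type) [Field F] [Fintype F] (hodd : Odd (Fintype.card F))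
    (hns : ¬ IsSquare (-1 : F)) :
    (∃ g : SL2 F, pgact F g '' {aInfty F, aPt F 0} = {aInfty F, aPt F 0} ∧
        pgact F g '' ASq F = ANSq F) ∧
    (∀ a a' a'' b b' b'' : Submodule F (Fin 2 → F),
      Module.finrank F ↥a = 1 → Module.finrank F ↥a' = 1 → Module.finrank F ↥a'' = 1 →
      Module.finrank F ↥b = 1 → Module.finrank F ↥b' = 1 → Module.finrank F ↥b'' = 1 →
      a ≠ a' → a ≠ a'' → a' ≠ a'' → b ≠ b' → b ≠ b'' → b' ≠ b'' →
      ∃ g : SL2 F, pgact F g '' {a, a'} = {b, b'} ∧ pgact F g a'' = b'') :=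
  statement11_general F hns (isSquare_or_isSquare_neg hns)
end

section
/- Let F be a field of characteristic 2 and m ≥ 2 an integer. In F^m ⊗ F^m let W be the span of {v ⊗ v : v ∈ F^m} and A the span of {u ⊗ w + w ⊗ u : u, w ∈ F^m}. Then A ⊆ W, dim A = m(m−1)/2, dim W = m(m+1)/2, and both A and W are invariant under the map g ⊗ g for every g ∈ GL(m,F); in particular A is a proper nontrivial GL(m,F)-submodule of W. -/
open TensorProduct

/-!
Fix a finite basis `b` of `M` (`F^m` in the statement). The swap permutes the basis `b i ⊗ b j` of
`M ⊗ M`, and its orbits are indexed by `Sym2 ι`; the orbit sums are linearly independent because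
they have disjoint supports. All the orbit sums together span `W`: the coefficients of `v ⊗ v` are
constant on orbits, and for `i ≠ j` the orbit sum over `{i, j}` is
`(b i + b j) ⊗ (b i + b j) - b i ⊗ b i - b j ⊗ b j`. In characteristic 2 the generators
`2 (b i ⊗ b i)` of `A` vanish, so `A` is spanned by the sums over the orbits of size 2. The
dimensions are thus the numbers of unordered pairs, with and without repetition.
-/

section FiberSums

variable {R V κ σ : Type*} [Semiring R] [AddCommMonoid V] [Module R V] [Fintype κ]
  [DecidableEq σ]

theorem sum_smul_sum_fiber [Fintype σ] (f : κ → σ) (c : σ → R) (v : κ → V) :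
    ∑ z, c z • ∑ p with f p = z, v p = ∑ p, c (f p) • v p := by
  rw [← Finset.sum_fiberwise Finset.univ f]
  refine Finset.sum_congr rfl fun z _ => ?_
  rw [Finset.smul_sum]
  exact Finset.sum_congr rfl fun p hp => by rw [(Finset.mem_filter.mp hp).2]

theorem linearIndependent_sum_fiber {v : κ → V} (hv : LinearIndependent R v) {f : κ → σ}
    (hf : Function.Surjective f) :
    LinearIndependent R fun z => ∑ p with f p = z, v p := by
  have : Fintype σ := Fintype.ofSurjective f hf
  rw [Fintype.linearIndependent_iffₛ]
  intro c d hcd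
  simp only [sum_smul_sum_fiber] at hcd
  exact hf.forall.mpr (Fintype.linearIndependent_iffₛ.mp hv _ _ hcd)

end FiberSums

section Semiring

variable (R M : Type*) {N : Type*} [CommSemiring R] [AddCommMonoid M] [Module R M]
  [AddCommMonoid N] [Module R N]

/-- The submodule `W` of `M ⊗ M` spanned by the squares `v ⊗ v`. -/
def squareTensors : Submodule R (M ⊗[R] M) :=
  Submodule.span R {x | ∃ v : M, x = v ⊗ₜ[R] v}

/-- The submodule `A` of `M ⊗ M` spanned by the symmetrizations `u ⊗ w + w ⊗ u`. The sign is `+`,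
so these are the antisymmetrizations only in characteristic 2. -/
def symmetrizedTensors : Submodule R (M ⊗[R] M) :=
  Submodule.span R {x | ∃ u w : M, x = u ⊗ₜ[R] w + w ⊗ₜ[R] u}

variable {R M}

theorem tmul_self_mem_squareTensors (v : M) : v ⊗ₜ[R] v ∈ squareTensors R M :=
  Submodule.subset_span ⟨v, rfl⟩

theorem map_squareTensors_of_surjective {f : M →ₗ[R] N} (hf : Function.Surjective f) :
    (squareTensors R M).map (TensorProduct.map f f) = squareTensors R N := by
  rw [squareTensors, squareTensors, Submodule.map_span]
  congr 1
  ext x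
  simp [hf.exists, eq_comm]

theorem map_symmetrizedTensors_of_surjective {f : M →ₗ[R] N} (hf : Function.Surjective f) :
    (symmetrizedTensors R M).map (TensorProduct.map f f) = symmetrizedTensors R N := by
  rw [symmetrizedTensors, symmetrizedTensors, Submodule.map_span]
  congr 1
  ext x
  simp [hf.exists, eq_comm]

theorem symmetrizedTensors_eq_range :
    symmetrizedTensors R M =
      LinearMap.range (LinearMap.id + (TensorProduct.comm R M M).toLinearMap) := by
  rw [LinearMap.range_eq_map, ← TensorProduct.span_tmul_eq_top, Submodule.map_span,
    symmetrizedTensors]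
  congr 1
  ext x
  simp [eq_comm]

theorem symmetrizedTensors_eq_span_basis {ι : Type*} (b : Module.Basis ι R M) :
    symmetrizedTensors R M =
      Submodule.span R
        (Set.range fun p : ι × ι => b p.1 ⊗ₜ[R] b p.2 + b p.2 ⊗ₜ[R] b p.1) := by
  rw [symmetrizedTensors_eq_range, LinearMap.range_eq_map, ← (b.tensorProduct b).span_eq,
    Submodule.map_span, ← Set.range_comp]
  congr! with p
  simp [Module.Basis.tensorProduct_apply']

variable {ι : Type*} [Fintype ι] [DecidableEq ι] (b : Module.Basis ι R M)

/-- The sum of the basis tensors `b i ⊗ b j` over the orbit `z` of the swap on pairs of indices: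
it is `b i ⊗ b i` for `z = s(i, i)` and `b i ⊗ b j + b j ⊗ b i` for `z = s(i, j)` with `i ≠ j`. -/
noncomputable def swapOrbitSum (z : Sym2 ι) : M ⊗[R] M :=
  ∑ p : ι × ι with s(p.1, p.2) = z, b.tensorProduct b p

theorem swapOrbitSum_diag (i : ι) : swapOrbitSum b s(i, i) = b i ⊗ₜ[R] b i := by
  have fiber : ({p | s(p.1, p.2) = s(i, i)} : Finset (ι × ι)) = {(i, i)} := by
    ext ⟨k, l⟩
    simp
  rw [swapOrbitSum, fiber, Finset.sum_singleton, Module.Basis.tensorProduct_apply]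

theorem swapOrbitSum_of_ne {i j : ι} (hij : i ≠ j) :
    swapOrbitSum b s(i, j) = b i ⊗ₜ[R] b j + b j ⊗ₜ[R] b i := by
  have fiber : ({p | s(p.1, p.2) = s(i, j)} : Finset (ι × ι)) = {(i, j), (j, i)} := by
    ext ⟨k, l⟩
    simp
  rw [swapOrbitSum, fiber, Finset.sum_pair (by simp [hij]), Module.Basis.tensorProduct_apply,
    Module.Basis.tensorProduct_apply]

theorem linearIndependent_swapOrbitSum : LinearIndependent R (swapOrbitSum b) :=
  linearIndependent_sum_fiber (b.tensorProduct b).linearIndependent Sym2.mk_surjective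

theorem linearIndependent_swapOrbitSum_not_isDiag :
    LinearIndependent R fun z : {z : Sym2 ι // ¬z.IsDiag} => swapOrbitSum b z :=
  (linearIndependent_swapOrbitSum b).comp Subtype.val Subtype.val_injective

theorem tmul_self_eq_sum_swapOrbitSum (v : M) :
    v ⊗ₜ[R] v = ∑ z : Sym2 ι, (z.map (b.repr v)).mul • swapOrbitSum b z :=
  calc
    v ⊗ₜ[R] v = ∑ p : ι × ι, (s(p.1, p.2).map (b.repr v)).mul • b.tensorProduct b p := by
      rw [← (b.tensorProduct b).sum_repr (v ⊗ₜ[R] v)]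
      refine Finset.sum_congr rfl fun ⟨i, j⟩ _ => ?_
      rw [Module.Basis.tensorProduct_repr_tmul_apply, smul_eq_mul, mul_comm, Sym2.map_mk,
        Sym2.mul_mk]
    _ = _ := (sum_smul_sum_fiber _ (fun z : Sym2 ι => (z.map (b.repr v)).mul) _).symm

end Semiring

section Ring

variable {R M : Type*} [CommRing R] [AddCommGroup M] [Module R M]

theorem tmul_add_tmul_swap_mem_squareTensors (u w : M) :
    u ⊗ₜ[R] w + w ⊗ₜ[R] u ∈ squareTensors R M := by
  have polarization :
      u ⊗ₜ[R] w + w ⊗ₜ[R] u = (u + w) ⊗ₜ[R] (u + w) - u ⊗ₜ[R] u - w ⊗ₜ[R] w := by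
    rw [TensorProduct.add_tmul, TensorProduct.tmul_add, TensorProduct.tmul_add]
    abel
  rw [polarization]
  exact sub_mem (sub_mem (tmul_self_mem_squareTensors _) (tmul_self_mem_squareTensors _))
    (tmul_self_mem_squareTensors _)

theorem symmetrizedTensors_le_squareTensors :
    symmetrizedTensors R M ≤ squareTensors R M := by
  rw [symmetrizedTensors, Submodule.span_le]
  rintro _ ⟨u, w, rfl⟩
  exact tmul_add_tmul_swap_mem_squareTensors u w

section Basis

variable {ι : Type*} [Fintype ι] [DecidableEq ι] (b : Module.Basis ι R M)

theorem swapOrbitSum_mem_squareTensors (z : Sym2 ι) : swapOrbitSum b z ∈ squareTensors R M := by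
  induction z with | _ i j
  obtain rfl | hij := eq_or_ne i j
  · rw [swapOrbitSum_diag]
    exact tmul_self_mem_squareTensors _
  · rw [swapOrbitSum_of_ne b hij]
    exact tmul_add_tmul_swap_mem_squareTensors _ _

theorem squareTensors_eq_span_swapOrbitSum :
    squareTensors R M = Submodule.span R (Set.range (swapOrbitSum b)) := by
  refine le_antisymm (Submodule.span_le.mpr ?_) (Submodule.span_le.mpr ?_)
  · rintro _ ⟨v, rfl⟩
    rw [tmul_self_eq_sum_swapOrbitSum b]
    exact sum_mem fun z _ => Submodule.smul_mem _ _ (Submodule.subset_span ⟨z, rfl⟩)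
  · rintro _ ⟨z, rfl⟩
    exact swapOrbitSum_mem_squareTensors b z

theorem symmetrizedTensors_eq_span_swapOrbitSum [CharP R 2] :
    symmetrizedTensors R M =
      Submodule.span R (Set.range fun z : {z : Sym2 ι // ¬z.IsDiag} => swapOrbitSum b z) := by
  rw [symmetrizedTensors_eq_span_basis b]
  refine le_antisymm (Submodule.span_le.mpr ?_) (Submodule.span_mono ?_)
  · rintro _ ⟨⟨i, j⟩, rfl⟩
    obtain rfl | hij := eq_or_ne i j
    · simp [← two_smul R, CharTwo.two_eq_zero]
    · exact Submodule.subset_span ⟨⟨s(i, j), hij⟩, swapOrbitSum_of_ne b hij⟩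
  · rintro _ ⟨⟨z, hz⟩, rfl⟩
    induction z with | _ i j
    exact ⟨(i, j), (swapOrbitSum_of_ne b hz).symm⟩

end Basis

section Free

variable (R M) [Module.Free R M] [Module.Finite R M]

theorem finrank_squareTensors [Nontrivial R] :
    Module.finrank R (squareTensors R M) = (Module.finrank R M + 1).choose 2 := by
  classical
  let b := Module.Free.chooseBasis R M
  rw [squareTensors_eq_span_swapOrbitSum b,
    finrank_span_eq_card (linearIndependent_swapOrbitSum b), Sym2.card,
    Module.finrank_eq_card_basis b]

theorem finrank_symmetrizedTensors [CharP R 2] :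
    Module.finrank R (symmetrizedTensors R M) = (Module.finrank R M).choose 2 := by
  classical
  have : Nontrivial R := CharP.nontrivial_of_char_ne_one (v := 2) (by decide)
  let b := Module.Free.chooseBasis R M
  rw [symmetrizedTensors_eq_span_swapOrbitSum b,
    finrank_span_eq_card (linearIndependent_swapOrbitSum_not_isDiag b),
    Sym2.card_subtype_not_diag, Module.finrank_eq_card_basis b]

end Free

end Ring

theorem statement13_general (R M : Type*) [CommRing R] [CharP R 2] [AddCommGroup M] [Module R M]
    [Module.Free R M] (hM : 2 ≤ Module.finrank R M) :
    symmetrizedTensors R M ≤ squareTensors R M ∧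
    Module.finrank R (symmetrizedTensors R M) =
      Module.finrank R M * (Module.finrank R M - 1) / 2 ∧
    Module.finrank R (squareTensors R M) =
      Module.finrank R M * (Module.finrank R M + 1) / 2 ∧
    (∀ g : M ≃ₗ[R] M,
      (symmetrizedTensors R M).map (TensorProduct.map g.toLinearMap g.toLinearMap) =
        symmetrizedTensors R M ∧
      (squareTensors R M).map (TensorProduct.map g.toLinearMap g.toLinearMap) =
        squareTensors R M) ∧
    symmetrizedTensors R M ≠ ⊥ ∧ symmetrizedTensors R M ≠ squareTensors R M := by
  have : Nontrivial R := CharP.nontrivial_of_char_ne_one (v := 2) (by decide)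
  have : Module.Finite R M := Module.finite_of_finrank_pos (by lia)
  have finrank_A := finrank_symmetrizedTensors R M
  have finrank_W := finrank_squareTensors R M
  refine ⟨symmetrizedTensors_le_squareTensors, ?_, ?_, fun g =>
    ⟨map_symmetrizedTensors_of_surjective g.surjective,
      map_squareTensors_of_surjective g.surjective⟩, fun A_eq_bot => ?_, fun A_eq_W => ?_⟩
  · rw [finrank_A, Nat.choose_two_right]
  · rw [finrank_W, Nat.choose_two_right, Nat.add_sub_cancel, mul_comm]
  · rw [A_eq_bot, finrank_bot] at finrank_A
    exact (Nat.choose_pos hM).ne finrank_A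
  · rw [A_eq_W, finrank_W, Nat.choose_succ_succ', Nat.choose_one_right] at finrank_A
    lia

/-- Let `F` be a field of characteristic 2 and `m ≥ 2`.  In `F^m ⊗ F^m` let
`W` be the span of `{v ⊗ v}` and `A` the span of `{u ⊗ w + w ⊗ u}`.  Then `A ⊆ W`,
`dim A = m(m−1)/2`, `dim W = m(m+1)/2`, both `A` and `W` are invariant under `g ⊗ g` for
every `g ∈ GL(m,F)`, and `A` is a proper nontrivial submodule of `W`. -/
theorem statement13 (F : Type*) [Field F] [CharP F 2] (m : ℕ) (hm : 2 ≤ m)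
    (W A : Submodule F (TensorProduct F (Fin m → F) (Fin m → F)))
    (hW : W = Submodule.span F {x | ∃ v : Fin m → F, x = v ⊗ₜ[F] v})
    (hA : A = Submodule.span F
      {x | ∃ u w : Fin m → F, x = u ⊗ₜ[F] w + w ⊗ₜ[F] u}) :
    A ≤ W ∧
    Module.finrank F ↥A = m * (m - 1) / 2 ∧
    Module.finrank F ↥W = m * (m + 1) / 2 ∧
    (∀ g : (Fin m → F) ≃ₗ[F] (Fin m → F),
      Submodule.map (TensorProduct.map g.toLinearMap g.toLinearMap) A = A ∧
      Submodule.map (TensorProduct.map g.toLinearMap g.toLinearMap) W = W) ∧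
    A ≠ ⊥ ∧ A ≠ W := by
  obtain rfl : W = squareTensors F (Fin m → F) := hW
  obtain rfl : A = symmetrizedTensors F (Fin m → F) := hA
  simpa only [Module.finrank_fin_fun] using
    statement13_general F (Fin m → F) (by rwa [Module.finrank_fin_fun])
end

section
/- Let F be a perfect field of characteristic 2, l a 2-dimensional subspace of F⁴, and x ∈ F⁴ a nonzero vector such that ν₄(x) lies in the linear span of {ν₄(z) : z ∈ l} in F^10. Then x ∈ l. Equivalently, the plane spanned by the conic ν₄(l) contains no point of the veronesean image of PG(3,F) outside the conic itself. -/
/-! Restricting `w : Sym2 ι → F` to the pairs through a fixed index `i`, i.e. taking the `i`-th row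
of the symmetric matrix `w`, is linear and sends `ν(z)` to `z i • z`. Hence it maps the span of
`ν(l)` into `l`, so `x i • x ∈ l` for every `i` whenever `ν(x)` lies in that span. A nonzero
coordinate of `x` can then be divided out. -/

/-- The quadratic Veronese map `x ↦ (x i * x j)`, for coordinates indexed by an arbitrary type
`ι`. The products are indexed by unordered pairs, so that no order on `ι` is needed. -/
def veronese {ι R : Type*} [CommMagma R] (x : ι → R) : Sym2 ι → R :=
  fun p => (p.map x).mul

theorem nu4_eq_veronese (F : Type*) [Field F] : nu4 F = veronese := by
  ext x ⟨i, j⟩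
  rfl

theorem funLeft_veronese {ι R : Type*} [CommSemiring R] (x : ι → R) (i : ι) :
    LinearMap.funLeft R R (fun j => s(i, j)) (veronese x) = x i • x :=
  rfl

theorem smul_mem_of_veronese_mem_span {ι R : Type*} [CommSemiring R] {l : Submodule R (ι → R)}
    {x : ι → R} (hx : veronese x ∈ Submodule.span R (veronese '' (l : Set (ι → R)))) (i : ι) :
    x i • x ∈ l := by
  have span_le : Submodule.span R (veronese '' (l : Set (ι → R))) ≤
      l.comap (LinearMap.funLeft R R fun j => s(i, j)) := by
    rw [Submodule.span_le, Set.image_subset_iff]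
    intro z hz
    exact l.smul_mem (z i) hz
  rw [← funLeft_veronese]
  exact span_le hx

theorem statement17_general {ι F : Type*} [Semifield F] {l : Submodule F (ι → F)} {x : ι → F}
    (hx : veronese x ∈ Submodule.span F (veronese '' (l : Set (ι → F)))) : x ∈ l := by
  obtain rfl | hx0 := eq_or_ne x 0
  · exact l.zero_mem
  · obtain ⟨i, hi⟩ := Function.ne_iff.mp hx0
    exact (l.smul_mem_iff hi).mp (smul_mem_of_veronese_mem_span hx i)

/-- Let `F` be a perfect field of characteristic 2 (squaring is surjective),
`l` a 2-dimensional subspace of `F⁴`, and `x ∈ F⁴` a nonzero vector with `ν₄(x)` in the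
span of `ν₄(l)`.  Then `x ∈ l`: the plane spanned by the conic `ν₄(l)` contains no point of
the veronesean image of `PG(3,F)` outside the conic itself. -/
theorem statement17 (F : Type*) [Field F] [CharP F 2]
    (hperf : Function.Surjective fun x : F => x ^ 2)
    (l : Submodule F (Fin 4 → F)) (hl : Module.finrank F ↥l = 2)
    (x : Fin 4 → F) (hx : x ≠ 0)
    (hmem : nu4 F x ∈ Submodule.span F (nu4 F '' (l : Set (Fin 4 → F)))) :
    x ∈ l := by
  rw [nu4_eq_veronese] at hmem
  exact statement17_general hmem
end
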